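/- arXiv:2403.15259 — 2 statements merged into one kernel-verified Lean document; each statement's English description precedes it below -/
import Mathlib

section
/- Let E be an ordered Polish space and P a monotone Markov kernel on E such that the set M = {(x,y) : x ⪯ y} is achievable, and assume there exists a stationary distribution π for P. Then π is the unique stationary distribution and, for each x ∈ E, sup over g ∈ G of |E[g(Xₙˣ)] − ∫ g dπ| tends to 0 as n → ∞. -/
open MeasureTheory ProbabilityTheory Filter Topology

/-- `μ` is *stochastically smaller* than `ν` (written `μ ⪯ ν` in the paper):
`μ I ≤ ν I` for every Borel increasing (upper) set `I`. -/
def StochDom {E : Type*} [MeasurableSpace E] [Preorder E] (μ ν : Measure E) : Prop :=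
  ∀ I : Set E, MeasurableSet I → IsUpperSet I → μ I ≤ ν I

/-- A Markov kernel `P` is *(stochastically) monotone* if for every bounded monotone
measurable `g : E → [0,1]` the map `x ↦ ∫ g dP(x)` is again monotone. -/
def MonotoneKernel {E : Type*} [MeasurableSpace E] [Preorder E] (P : Kernel E E) : Prop :=
  ∀ g : E → ℝ, Measurable g → Monotone g → (∀ x, g x ∈ Set.Icc (0 : ℝ) 1) →
    Monotone fun x => ∫ y, g y ∂(P x)

/-- The `n`-step transition kernel `P⁽ⁿ⁾` of a Markov kernel `P`;
`kpow P n x` is the law of `Xₙˣ`, the chain with kernel `P` started at `x`. -/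
noncomputable def kpow {E : Type*} [MeasurableSpace E] (P : Kernel E E) : ℕ → Kernel E E
  | 0 => Kernel.id
  | n + 1 => P.comp (kpow P n)

/-- The process `Z` on `(Ω, μ)` is a (possibly time-inhomogeneous) Markov chain with
one-step kernels `Q n`, expressed through finite-dimensional distributions: for every
bounded measurable cylinder functional `φ` of the past and every Borel set `A`,
`E[φ(Z₀,…,Zₙ) · 1_A(Z_{n+1})] = E[φ(Z₀,…,Zₙ) · (Q n)(Zₙ, A)]`. -/
def MCStep {Ω S : Type*} [MeasurableSpace Ω] [MeasurableSpace S]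
    (μ : Measure Ω) (Q : ℕ → Kernel S S) (Z : ℕ → Ω → S) : Prop :=
  ∀ (n : ℕ) (A : Set S), MeasurableSet A →
    ∀ φ : (Fin (n + 1) → S) → ℝ, Measurable φ → (∀ v, φ v ∈ Set.Icc (0 : ℝ) 1) →
      ∫ ω, φ (fun i => Z i.1 ω) * A.indicator (fun _ => (1 : ℝ)) (Z (n + 1) ω) ∂μ
        = ∫ ω, φ (fun i => Z i.1 ω) * ((Q n) (Z n ω) A).toReal ∂μ

/-- `X` on `(Ω, μ)` is a time-homogeneous Markov chain with kernel `P` started at `x`. -/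
def IsMChain {E Ω : Type*} [MeasurableSpace E] [MeasurableSpace Ω]
    (P : Kernel E E) (x : E) (μ : Measure Ω) (X : ℕ → Ω → E) : Prop :=
  IsProbabilityMeasure μ ∧ (∀ n, Measurable (X n)) ∧ (∀ᵐ ω ∂μ, X 0 ω = x) ∧
    MCStep μ (fun _ => P) X

/-- A *Markovian coupling* of two chains with kernel `P` started at `x` and `y`:
both coordinates are Markov chains with kernel `P` and the pair process is itself a
(possibly time-inhomogeneous) Markov chain. -/
def IsMarkovianCoupling {E Ω : Type*} [MeasurableSpace E] [MeasurableSpace Ω]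
    (P : Kernel E E) (x y : E) (μ : Measure Ω) (X Y : ℕ → Ω → E) : Prop :=
  IsMChain P x μ X ∧ IsMChain P y μ Y ∧
    ∃ Q : ℕ → Kernel (E × E) (E × E), (∀ n, IsMarkovKernel (Q n)) ∧
      MCStep μ Q fun n ω => (X n ω, Y n ω)

/-- A set `H ⊆ E × E` is *achievable* for the kernel `P` if for all `x, y` there is a
Markovian coupling of the chains started at `x` and `y` whose hitting time of `H`
is finite almost surely. -/
def Achievable {E : Type*} [MeasurableSpace E] (P : Kernel E E) (H : Set (E × E)) : Prop :=
  ∀ x y : E, ∃ (Ω : Type) (_ : MeasurableSpace Ω) (μ : Measure Ω) (X Y : ℕ → Ω → E),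
    IsMarkovianCoupling P x y μ X Y ∧ ∀ᵐ ω ∂μ, ∃ n, (X n ω, Y n ω) ∈ H

/-- Condition (BMC): every increasing sequence bounded above by some element converges. -/
def BMC (E : Type*) [Preorder E] [TopologicalSpace E] : Prop :=
  ∀ (x : ℕ → E) (y : E), Monotone x → (∀ n, x n ≤ y) → ∃ l, Tendsto x atTop (nhds l)

/-- The ordered metric space `E` is *normal*: there is a continuous `h : [0,∞) → [0,∞)`
with `h 0 = 0` such that `x ⪯ y ⪯ z` implies `d(x,y) ≤ h (d(x,z))`. -/
def NormalOrdered (E : Type*) [PseudoMetricSpace E] [Preorder E] : Prop :=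
  ∃ h : ℝ → ℝ, ContinuousOn h (Set.Ici 0) ∧ h 0 = 0 ∧ (∀ t ≥ (0 : ℝ), 0 ≤ h t) ∧
    ∀ x y z : E, x ≤ y → y ≤ z → dist x y ≤ h (dist x z)

/-- Condition (PR): there are `x₀ ⪯ y₀` such that the hitting times
`ν⁻ = min {n ≥ 1 : Xₙ^{x₀} ⪰ x₀}` and `ν⁺ = min {n ≥ 1 : Xₙ^{y₀} ⪯ y₀}`
have finite expectations. -/
def PRCond {E : Type*} [MeasurableSpace E] [Preorder E] (P : Kernel E E) : Prop :=
  ∃ x₀ y₀ : E, x₀ ≤ y₀ ∧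
    (∃ (Ω : Type) (_ : MeasurableSpace Ω) (μ : Measure Ω) (X : ℕ → Ω → E),
      IsMChain P x₀ μ X ∧ (∀ᵐ ω ∂μ, ∃ n, 1 ≤ n ∧ x₀ ≤ X n ω) ∧
      Integrable (fun ω => ((sInf {n : ℕ | 1 ≤ n ∧ x₀ ≤ X n ω} : ℕ) : ℝ)) μ) ∧
    (∃ (Ω : Type) (_ : MeasurableSpace Ω) (μ : Measure Ω) (X : ℕ → Ω → E),
      IsMChain P y₀ μ X ∧ (∀ᵐ ω ∂μ, ∃ n, 1 ≤ n ∧ X n ω ≤ y₀) ∧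
      Integrable (fun ω => ((sInf {n : ℕ | 1 ≤ n ∧ X n ω ≤ y₀} : ℕ) : ℝ)) μ)

open scoped ENNReal NNReal

/-!
Let `Θₙ` be the supremum over `g ∈ G` of the variance of `Pⁿg` under `π`. Monotonicity of `P` makes
`Θₙ` decreasing in `n`. If `gₙ` nearly attains `Θₙ`, the law of total variance
`Var_π(Pⁿ⁻ᵏgₙ) = ∫ Var(Pⁿ⁻ᵏgₙ; Pᵏ(x, ·)) π(dx) + Var_π(Pⁿgₙ)` has left side at most `Θₙ₋ₖ`, so for
every fixed `k` the conditional variances tend to `0` in mean. Whenever `Xₖˣ ⪯ Xₖʸ` with positive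
probability, Chebyshev's inequality bounds the excess of `Pⁿgₙ(x)` over `Pⁿgₙ(y)` by these
variances; by achievability `Pⁿgₙ` is therefore nearly constant, and `Θₙ → 0`.

This is convergence of `Pⁿgₙ - ∫ gₙ dπ` to `0` in `π`-measure. To reach every starting point `x`,
truncate: `h(n, k) = (Pⁿ⁻ᵏgₙ - ∫ gₙ dπ - ε)⁺` evaluated along `Xˣ` is a submartingale in `k ≤ n`,
so `h(n, 0)(x)` is at most the probability that `Xˣ` stays in the supports `{h(n, k) > 0}` for all
`k < K`. On that event either `Xˣ` and `Xʸ` fail to meet in `M` before time `K`, or `Xʸ` lies in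
the support at the meeting time, by monotonicity; integrated over `y ~ π`, the latter has small
probability. Exchanging the roles of the two chains gives the lower bound.

Limits of `Pⁿg(x)` for `g ∈ G` determine a stationary law because measurable upper sets generate
the Borel σ-algebra: if `x ⋠ y`, then `x` and `y` have open neighbourhoods `U`, `V` with no point of
`U` below a point of `V`, and iterating Lusin's separation of analytic sets yields a measurable
upper set containing `U` and disjoint from `V`.
-/

section Variance

variable {α β Ω : Type*} [MeasurableSpace α] [MeasurableSpace β] [MeasurableSpace Ω]

theorem lintegral_enorm_sub_sq_eq_evariance_add {μ : Measure Ω} [IsProbabilityMeasure μ]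
    {X : Ω → ℝ} (hX : Integrable X μ) (c : ℝ) :
    ∫⁻ ω, ‖X ω - c‖ₑ ^ 2 ∂μ = eVar[X; μ] + ‖μ[X] - c‖ₑ ^ 2 := by
  by_cases hX2 : MemLp X 2 μ
  · have hXc : MemLp (fun ω => X ω - c) 2 μ := hX2.sub (memLp_const c)
    have hmean : μ[fun ω => X ω - c] = μ[X] - c := by simp [integral_sub hX]
    have hvar : Var[X; μ] = ∫ ω, (X ω - c) ^ 2 ∂μ - (μ[X] - c) ^ 2 := by
      rw [← hmean, ← variance_sub_const hX2.aestronglyMeasurable c]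
      exact variance_eq_sub hXc
    have hsq (t : ℝ) : ‖t‖ₑ ^ 2 = ENNReal.ofReal (t ^ 2) := by
      rw [← enorm_pow, Real.enorm_of_nonneg (sq_nonneg t)]
    simp only [hsq]
    rw [← ofReal_integral_eq_lintegral_ofReal hXc.integrable_sq (ae_of_all _ fun _ => sq_nonneg _),
      ← hX2.ofReal_variance_eq, ← ENNReal.ofReal_add (variance_nonneg X μ) (sq_nonneg _), hvar,
      sub_add_cancel]
  · have hXc : ¬ MemLp (fun ω => X ω - c) 2 μ := fun h =>
      hX2 (by simpa [Pi.add_def] using h.add (memLp_const c))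
    have htop : ∫⁻ ω, ‖X ω - c‖ₑ ^ 2 ∂μ = ⊤ := by
      by_contra h
      refine hXc ⟨hX.aestronglyMeasurable.sub aestronglyMeasurable_const, ?_⟩
      rw [eLpNorm_lt_top_iff_lintegral_rpow_enorm_lt_top two_ne_zero ENNReal.ofNat_ne_top]
      simpa using lt_top_iff_ne_top.2 h
    rw [htop, evariance_eq_top hX.aestronglyMeasurable hX2, top_add]

theorem evariance_le_lintegral_enorm_sub_sq {μ : Measure Ω} [IsProbabilityMeasure μ]
    {X : Ω → ℝ} (hX : Integrable X μ) (c : ℝ) : eVar[X; μ] ≤ ∫⁻ ω, ‖X ω - c‖ₑ ^ 2 ∂μ :=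
  le_self_add.trans_eq (lintegral_enorm_sub_sq_eq_evariance_add hX c).symm

theorem evariance_le_lintegral_prod_enorm_sub_sq {μ : Measure Ω} [IsProbabilityMeasure μ]
    {X : Ω → ℝ} (hX : Measurable X) (hXi : Integrable X μ) :
    eVar[X; μ] ≤ ∫⁻ p, ‖X p.1 - X p.2‖ₑ ^ 2 ∂(μ.prod μ) := by
  have hmeas : Measurable fun p : Ω × Ω => ‖X p.1 - X p.2‖ₑ ^ 2 := by fun_prop
  rw [lintegral_prod_symm' _ hmeas]
  calc eVar[X; μ] = ∫⁻ _, eVar[X; μ] ∂μ := by simp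
    _ ≤ ∫⁻ ω', ∫⁻ ω, ‖X ω - X ω'‖ₑ ^ 2 ∂μ ∂μ :=
      lintegral_mono fun ω' => evariance_le_lintegral_enorm_sub_sq hXi (X ω')

theorem integral_comp_measure {F : Type*} [NormedAddCommGroup F] [NormedSpace ℝ F]
    {μ : Measure α} {κ : Kernel α β} {f : β → F} (hf : Integrable f (κ ∘ₘ μ)) :
    ∫ y, f y ∂(κ ∘ₘ μ) = ∫ x, ∫ y, f y ∂(κ x) ∂μ := by
  rw [Measure.comp_eq_comp_const_apply] at hf ⊢
  rw [Kernel.integral_comp hf, Kernel.const_apply]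

theorem measurable_evariance_kernel {κ : Kernel α β} [IsMarkovKernel κ] {f : β → ℝ}
    (hf : Measurable f) : Measurable fun x => eVar[f; κ x] := by
  have hmean : Measurable fun x => ∫ y, f y ∂(κ x) :=
    hf.stronglyMeasurable.integral_kernel.measurable
  have : Measurable fun p : α × β => ‖f p.2 - ∫ y, f y ∂(κ p.1)‖ₑ ^ 2 :=
    ((hf.comp measurable_snd).sub (hmean.comp measurable_fst)).enorm.pow_const 2
  exact this.lintegral_kernel_prod_right'

theorem evariance_comp {μ : Measure α} [IsProbabilityMeasure μ] {κ : Kernel α β}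
    [IsMarkovKernel κ] {f : β → ℝ} (hf : Measurable f) (hfi : Integrable f (κ ∘ₘ μ)) :
    eVar[f; κ ∘ₘ μ] = ∫⁻ x, eVar[f; κ x] ∂μ + eVar[fun x => ∫ y, f y ∂(κ x); μ] := by
  have hmean : ∫ y, f y ∂(κ ∘ₘ μ) = ∫ x, ∫ y, f y ∂(κ x) ∂μ := integral_comp_measure hfi
  have hfκ : ∀ᵐ x ∂μ, Integrable f (κ x) :=
    ((Measure.integrable_comp_iff hfi.aestronglyMeasurable).1 hfi).1
  calc eVar[f; κ ∘ₘ μ]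
      = ∫⁻ x, ∫⁻ y, ‖f y - ∫ y, f y ∂(κ ∘ₘ μ)‖ₑ ^ 2 ∂(κ x) ∂μ :=
        Measure.lintegral_bind κ.aemeasurable (by fun_prop)
    _ = ∫⁻ x, (eVar[f; κ x] + ‖∫ y, f y ∂(κ x) - ∫ y, f y ∂(κ ∘ₘ μ)‖ₑ ^ 2) ∂μ :=
        lintegral_congr_ae <| hfκ.mono fun x hx => lintegral_enorm_sub_sq_eq_evariance_add hx _
    _ = ∫⁻ x, eVar[f; κ x] ∂μ + eVar[fun x => ∫ y, f y ∂(κ x); μ] := by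
        rw [lintegral_add_left (measurable_evariance_kernel hf), hmean]
        rfl

theorem evariance_map {μ : Measure α} {X : β → ℝ} {Y : α → β}
    (hX : AEMeasurable X (μ.map Y)) (hY : AEMeasurable Y μ) :
    eVar[X; μ.map Y] = eVar[X ∘ Y; μ] := by
  have hdev : AEMeasurable (fun z => ‖X z - ∫ z, X z ∂(μ.map Y)‖ₑ ^ 2) (μ.map Y) :=
    (hX.sub_const _).enorm.pow_const 2
  rw [evariance, evariance, lintegral_map' hdev hY, integral_map hY hX.aestronglyMeasurable]
  rfl

theorem enorm_sub_sq_mul_measure_le_evariance {μ : Measure Ω}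
    {U V : Ω → ℝ} (hU : AEStronglyMeasurable U μ) (hV : AEStronglyMeasurable V μ)
    (h : μ[V] ≤ μ[U]) :
    ‖μ[U] - μ[V]‖ₑ ^ 2 * μ {ω | U ω ≤ V ω} ≤ 4 * (eVar[U; μ] + eVar[V; μ]) := by
  obtain ⟨c, hc⟩ : ∃ c : ℝ≥0, ∫ ω, U ω ∂μ - ∫ ω, V ω ∂μ = 2 * (c : ℝ) :=
    ⟨Real.toNNReal ((μ[U] - μ[V]) / 2), by rw [Real.coe_toNNReal _ (by linarith)]; ring⟩
  rcases eq_or_ne c 0 with rfl | hc0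
  · simp [hc]
  have hcover : {ω | U ω ≤ V ω} ⊆ {ω | c ≤ |U ω - μ[U]|} ∪ {ω | c ≤ |V ω - μ[V]|} := by
    intro ω hω
    by_contra hnot
    simp only [Set.mem_union, Set.mem_ofPred_eq, not_or, not_le, abs_lt] at hω hnot
    linarith [hnot.1.1, hnot.2.2]
  have hnorm : ‖μ[U] - μ[V]‖ₑ ^ 2 = 4 * (c : ℝ≥0∞) ^ 2 := by
    rw [hc, enorm_mul, mul_pow]
    norm_num [Real.enorm_eq_ofReal]
  calc ‖μ[U] - μ[V]‖ₑ ^ 2 * μ {ω | U ω ≤ V ω}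
      ≤ 4 * (c : ℝ≥0∞) ^ 2 * (eVar[U; μ] / c ^ 2 + eVar[V; μ] / c ^ 2) := by
        rw [hnorm]
        gcongr
        exact (measure_mono hcover).trans <| (measure_union_le _ _).trans <|
          add_le_add (meas_ge_le_evariance_div_sq hU hc0) (meas_ge_le_evariance_div_sq hV hc0)
    _ = 4 * (eVar[U; μ] + eVar[V; μ]) := by
        rw [ENNReal.div_add_div_same, mul_assoc, ENNReal.mul_div_cancel (by simpa) (by simp)]

end Variance

theorem enorm_sub_sq_le_one {a b : ℝ} (ha : a ∈ Set.Icc (0 : ℝ) 1) (hb : b ∈ Set.Icc (0 : ℝ) 1) :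
    ‖a - b‖ₑ ^ 2 ≤ 1 := by
  refine pow_le_one₀ zero_le ?_
  rw [Real.enorm_eq_ofReal_abs, ENNReal.ofReal_le_one]
  exact Real.dist_le_of_mem_Icc_01 ha hb

theorem lintegral_prod_add {α β : Type*} [MeasurableSpace α] [MeasurableSpace β] {μ : Measure α}
    {ν : Measure β} [IsProbabilityMeasure μ] [IsProbabilityMeasure ν] {f : α → ℝ≥0∞}
    {g : β → ℝ≥0∞} (hf : Measurable f) (hg : Measurable g) :
    ∫⁻ p, (f p.1 + g p.2) ∂(μ.prod ν) = ∫⁻ x, f x ∂μ + ∫⁻ y, g y ∂ν := by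
  have hfst : Measurable fun p : α × β => f p.1 := hf.comp measurable_fst
  rw [lintegral_add_left hfst, measurePreserving_fst.lintegral_comp hf,
    measurePreserving_snd.lintegral_comp hg]

theorem ofReal_integral_le_lintegral_ofReal {α : Type*} [MeasurableSpace α] {μ : Measure α}
    {f : α → ℝ} (hf : Integrable f μ) :
    ENNReal.ofReal (∫ x, f x ∂μ) ≤ ∫⁻ x, ENNReal.ofReal (f x) ∂μ := by
  rw [integral_eq_lintegral_pos_part_sub_lintegral_neg_part hf]
  exact (ENNReal.ofReal_le_ofReal (sub_le_self _ ENNReal.toReal_nonneg)).trans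
    ENNReal.ofReal_toReal_le

theorem tendsto_lintegral_zero_of_eventually_le_mul_sum {α : Type*} [MeasurableSpace α]
    {ν : Measure α} [IsFiniteMeasure ν] {f : ℕ → α → ℝ≥0∞} {W : ℕ → ℕ → α → ℝ≥0∞} {C : ℝ≥0∞}
    (hC : C ≠ ∞) (hf : ∀ n, Measurable (f n)) (hfC : ∀ n z, f n z ≤ C)
    (hW : ∀ k n, Measurable (W k n))
    (hWlim : ∀ k, Tendsto (fun n => ∫⁻ z, W k n z ∂ν) atTop (𝓝 0))
    (hle : ∀ᵐ z ∂ν, ∃ N : ℕ, ∀ n ≥ N, f n z ≤ N * ∑ k ∈ Finset.range N, W k n z) :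
    Tendsto (fun n => ∫⁻ z, f n z ∂ν) atTop (𝓝 0) := by
  let R (N n : ℕ) (z : α) : ℝ≥0∞ := N * ∑ k ∈ Finset.range N, W k n z
  have hR (N n : ℕ) : Measurable (R N n) :=
    (Finset.measurable_fun_sum _ fun k _ => hW k n).const_mul _
  have hRmono {N N' : ℕ} (h : N ≤ N') (n : ℕ) (z : α) : R N n z ≤ R N' n z := by
    simp only [R]; gcongr
  have hRlim (N : ℕ) : Tendsto (fun n => ∫⁻ z, R N n z ∂ν) atTop (𝓝 0) := by
    have hsum := tendsto_finsetSum (Finset.range N) fun k _ => hWlim k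
    have hmul := ENNReal.Tendsto.const_mul hsum (Or.inr (ENNReal.natCast_ne_top N))
    simp only [Finset.sum_const_zero, mul_zero] at hmul
    refine hmul.congr fun n => ?_
    rw [lintegral_const_mul _ (Finset.measurable_fun_sum _ fun k _ => hW k n),
      lintegral_finsetSum _ fun k _ => hW k n]
  let ψ (N : ℕ) (z : α) : ℝ≥0∞ := ⨆ n, f (N + n) z - R N (N + n) z
  have hψlim : Tendsto (fun N => ∫⁻ z, ψ N z ∂ν) atTop (𝓝 0) := by
    rw [← lintegral_zero (μ := ν)]
    refine tendsto_lintegral_of_dominated_convergence (fun _ => C)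
      (fun N => .iSup fun n => (hf _).sub (hR _ _))
      (fun N => ae_of_all _ fun z => iSup_le fun n => tsub_le_self.trans (hfC _ _))
      (by simp [lintegral_const, ENNReal.mul_ne_top hC]) ?_
    filter_upwards [hle] with z ⟨N₀, hN₀⟩
    refine tendsto_const_nhds.congr' <| (eventually_ge_atTop N₀).mono fun N hN => ?_
    refine (ENNReal.iSup_eq_zero.2 fun n => tsub_eq_zero_of_le ?_).symm
    exact (hN₀ _ (by omega)).trans (hRmono hN _ _)
  rw [ENNReal.tendsto_nhds_zero]
  intro ε hε
  have hε2 : 0 < ε / 2 := ENNReal.half_pos hε.ne'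
  obtain ⟨N, hN⟩ := (ENNReal.tendsto_nhds_zero.1 hψlim _ hε2).exists
  filter_upwards [ENNReal.tendsto_nhds_zero.1 (hRlim N) _ hε2, eventually_ge_atTop N] with n hn hNn
  obtain ⟨j, rfl⟩ := Nat.exists_eq_add_of_le hNn
  calc ∫⁻ z, f (N + j) z ∂ν
      ≤ ∫⁻ z, (ψ N z + R N (N + j) z) ∂ν := lintegral_mono fun z =>
        tsub_le_iff_right.1 (le_iSup (fun n => f (N + n) z - R N (N + n) z) j)
    _ = ∫⁻ z, ψ N z ∂ν + ∫⁻ z, R N (N + j) z ∂ν := lintegral_add_right _ (hR _ _)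
    _ ≤ ε / 2 + ε / 2 := add_le_add hN hn
    _ = ε := ENNReal.add_halves ε

theorem tendsto_iSup_zero_of_forall_selection {ι : Type*} [Nonempty ι] {a : ℕ → ι → ℝ}
    (ha : ∀ n i, 0 ≤ a n i)
    (h : ∀ s : ℕ → ι, Tendsto (fun n => a n (s n)) atTop (𝓝 0)) :
    Tendsto (fun n => ⨆ i, a n i) atTop (𝓝 0) := by
  have hnear (n : ℕ) : ∃ i, (⨆ i, a n i) - 1 / ((n : ℝ) + 1) < a n i :=
    exists_lt_of_lt_ciSup (sub_lt_self _ (by positivity))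
  choose s hs using hnear
  have hlim := (h s).add tendsto_one_div_add_atTop_nhds_zero_nat
  rw [add_zero] at hlim
  exact squeeze_zero (fun n => Real.iSup_nonneg (ha n)) (fun n => by linarith [hs n]) hlim

section Transition

variable {E : Type*} [MeasurableSpace E] {P : Kernel E E}

instance kpow.instIsMarkovKernel [IsMarkovKernel P] (n : ℕ) : IsMarkovKernel (kpow P n) := by
  induction n with
  | zero => exact inferInstanceAs (IsMarkovKernel Kernel.id)
  | succ n ih => exact inferInstanceAs (IsMarkovKernel (P ∘ₖ kpow P n))

theorem kpow_one (P : Kernel E E) : kpow P 1 = P := Kernel.comp_id P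

theorem kpow_add (P : Kernel E E) (m n : ℕ) : kpow P (m + n) = kpow P n ∘ₖ kpow P m := by
  induction n with
  | zero => exact (Kernel.id_comp _).symm
  | succ n ih => rw [← Nat.add_assoc, kpow, ih, kpow, Kernel.comp_assoc]

theorem kpow_comp_of_stationary {π : Measure E} (hπ : P ∘ₘ π = π) (n : ℕ) :
    kpow P n ∘ₘ π = π := by
  induction n with
  | zero => exact Measure.id_comp
  | succ n ih => rw [kpow, ← Measure.comp_assoc, ih, hπ]

/-- The `n`-step transition operator `Pⁿ` acting on functions: `transition P n g x` is
`E[g(Xₙˣ)]`. As a Bochner integral it is meaningful when `g` is integrable for `kpow P n x`. -/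
noncomputable def transition (P : Kernel E E) (n : ℕ) (g : E → ℝ) (x : E) : ℝ :=
  ∫ y, g y ∂(kpow P n x)

theorem transition_zero {g : E → ℝ} (hg : Measurable g) : transition P 0 g = g :=
  funext fun x => integral_dirac' g x hg.stronglyMeasurable

theorem transition_add {g : E → ℝ} (m n : ℕ) (hg : ∀ x, Integrable g (kpow P (m + n) x)) :
    transition P (m + n) g = transition P m (transition P n g) := by
  ext x
  specialize hg x
  rw [kpow_add] at hg
  simp only [transition, kpow_add]
  exact Kernel.integral_comp hg

/-- The test functions over which the paper takes suprema: `g` belongs to the class `G` of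
monotone measurable functions with values in `[0, 1]`. -/
def IsMonotoneTest [Preorder E] (g : E → ℝ) : Prop :=
  Measurable g ∧ Monotone g ∧ ∀ z, g z ∈ Set.Icc (0 : ℝ) 1

namespace IsMonotoneTest

variable [Preorder E] {g : E → ℝ}

theorem measurable (hg : IsMonotoneTest g) : Measurable g := hg.1

theorem monotone (hg : IsMonotoneTest g) : Monotone g := hg.2.1

theorem mem_Icc (hg : IsMonotoneTest g) (z : E) : g z ∈ Set.Icc (0 : ℝ) 1 := hg.2.2 z

theorem integrable (hg : IsMonotoneTest g) (μ : Measure E) [IsFiniteMeasure μ] :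
    Integrable g μ :=
  .of_mem_Icc 0 1 hg.measurable.aemeasurable (ae_of_all _ hg.mem_Icc)

theorem transition [IsMarkovKernel P] (hmono : MonotoneKernel P) (hg : IsMonotoneTest g) (n : ℕ) :
    IsMonotoneTest (transition P n g) := by
  induction n with
  | zero => rwa [transition_zero hg.measurable]
  | succ n ih =>
    rw [Nat.add_comm, transition_add 1 n fun _ => hg.integrable _]
    refine ⟨ih.measurable.stronglyMeasurable.integral_kernel.measurable, ?_, fun x =>
      (convex_Icc 0 1).integral_mem isClosed_Icc (ae_of_all _ ih.mem_Icc) (ih.integrable _)⟩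
    unfold _root_.transition
    rw [kpow_one]
    exact hmono _ ih.measurable ih.monotone ih.mem_Icc

theorem indicator_one {I : Set E} (hI : MeasurableSet I) (hI' : IsUpperSet I) :
    IsMonotoneTest (I.indicator fun _ => (1 : ℝ)) := by
  refine ⟨measurable_const.indicator hI, fun x y hxy => ?_, fun z => ?_⟩
  · by_cases hx : x ∈ I
    · simp only [Set.indicator_of_mem hx, Set.indicator_of_mem (hI' hxy hx), le_refl]
    · rw [Set.indicator_of_notMem hx]
      exact Set.indicator_nonneg (fun _ _ => zero_le_one) y
  · exact ⟨Set.indicator_nonneg (fun _ _ => zero_le_one) z,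
      Set.indicator_le_self' (fun _ _ => zero_le_one) z⟩

end IsMonotoneTest

end Transition

section Chain

variable {E Ω : Type*} [MeasurableSpace E] [MeasurableSpace Ω] {P : Kernel E E} {x : E}
  {μ : Measure Ω} {X : ℕ → Ω → E}

namespace IsMChain

theorem isProbabilityMeasure (hX : IsMChain P x μ X) : IsProbabilityMeasure μ := hX.1

theorem measurable (hX : IsMChain P x μ X) (n : ℕ) : Measurable (X n) := hX.2.1 n

theorem ae_eq_start (hX : IsMChain P x μ X) : X 0 =ᵐ[μ] fun _ => x := hX.2.2.1

variable [IsMarkovKernel P]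

theorem map_restrict_succ (hX : IsMChain P x μ X) (n : ℕ) {S : Set (Fin (n + 1) → E)}
    (hS : MeasurableSet S) {T : Set Ω} (hT : T = {ω | (fun i : Fin (n + 1) => X i ω) ∈ S}) :
    (μ.restrict T).map (X (n + 1)) = P ∘ₘ (μ.restrict T).map (X n) := by
  have := hX.isProbabilityMeasure
  have hTm : MeasurableSet T :=
    hT ▸ measurableSet_preimage (measurable_pi_lambda _ fun i => hX.measurable i) hS
  have hmem (ω : Ω) : S.indicator (fun _ => (1 : ℝ)) (fun i : Fin (n + 1) => X i ω)
      = T.indicator (fun _ => 1) ω := by rw [hT]; rfl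
  have hind (c : Ω → ℝ) : (fun ω => T.indicator (fun _ => (1 : ℝ)) ω * c ω) = T.indicator c := by
    ext ω; by_cases hω : ω ∈ T <;> simp [hω]
  ext A hA
  have hstep := hX.2.2.2 n A hA (S.indicator fun _ => 1) (measurable_const.indicator hS) fun v =>
    ⟨Set.indicator_nonneg (fun _ _ => zero_le_one) v,
      Set.indicator_le_self' (fun _ _ => zero_le_one) v⟩
  simp only [hmem, hind, integral_indicator hTm] at hstep
  have hleft : ∫ ω in T, A.indicator (fun _ => (1 : ℝ)) (X (n + 1) ω) ∂μ
      = (μ.restrict T (X (n + 1) ⁻¹' A)).toReal :=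
    integral_indicator_one (hX.measurable _ hA)
  have hright : ∫ ω in T, (P (X n ω) A).toReal ∂μ = (∫⁻ ω in T, P (X n ω) A ∂μ).toReal :=
    integral_toReal ((P.measurable_coe hA).comp (hX.measurable n)).aemeasurable
      (ae_of_all _ fun _ => measure_lt_top _ _)
  have hfin : ∫⁻ ω in T, P (X n ω) A ∂μ ≠ ∞ :=
    ne_top_of_le_ne_top (measure_ne_top (μ.restrict T) Set.univ)
      ((lintegral_mono fun _ => prob_le_one).trans_eq lintegral_one)
  rw [Measure.bind_apply hA P.aemeasurable, lintegral_map (P.measurable_coe hA) (hX.measurable n),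
    Measure.map_apply (hX.measurable _) hA]
  rw [hleft, hright] at hstep
  exact (ENNReal.toReal_eq_toReal_iff' (measure_ne_top _ _) hfin).1 hstep

theorem map_eq_kpow (hX : IsMChain P x μ X) (n : ℕ) : μ.map (X n) = kpow P n x := by
  have := hX.isProbabilityMeasure
  induction n with
  | zero =>
    rw [Measure.map_congr hX.ae_eq_start, Measure.map_const, measure_univ, one_smul]
    rfl
  | succ n ih =>
    have hstep := hX.map_restrict_succ n MeasurableSet.univ (Set.ofPred_mem_eq (s := Set.univ)).symm
    rw [Measure.restrict_univ, ih] at hstep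
    rw [hstep, kpow, Kernel.comp_apply]

theorem lintegral_restrict_succ (hX : IsMChain P x μ X) (n : ℕ) {S : Set (Fin (n + 1) → E)}
    (hS : MeasurableSet S) {T : Set Ω} (hT : T = {ω | (fun i : Fin (n + 1) => X i ω) ∈ S})
    {h : E → ℝ≥0∞} (hh : Measurable h) :
    ∫⁻ ω in T, h (X (n + 1) ω) ∂μ = ∫⁻ ω in T, ∫⁻ z, h z ∂(P (X n ω)) ∂μ := by
  rw [← lintegral_map hh (hX.measurable _), hX.map_restrict_succ n hS hT,
    Measure.lintegral_bind P.aemeasurable hh.aemeasurable,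
    lintegral_map hh.lintegral_kernel (hX.measurable n)]

theorem le_measure_forall_ne_zero (hX : IsMChain P x μ X) {h : ℕ → E → ℝ≥0∞}
    (hm : ∀ k, Measurable (h k)) {K : ℕ} (hle : ∀ z, h K z ≤ 1)
    (hsub : ∀ k < K, ∀ z, h k z ≤ ∫⁻ w, h (k + 1) w ∂(P z)) :
    h 0 x ≤ μ {ω | ∀ k < K, h k (X k ω) ≠ 0} := by
  have := hX.isProbabilityMeasure
  let T (j : ℕ) : Set Ω := {ω | ∀ k < j, h k (X k ω) ≠ 0}
  have hTsucc (j : ℕ) : T (j + 1) = T j ∩ {ω | h j (X j ω) ≠ 0} := by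
    ext ω; exact Nat.forall_lt_succ_right
  have hkilled (j : ℕ) (hj : j ≤ K) : h 0 x ≤ ∫⁻ ω in T j, h j (X j ω) ∂μ := by
    induction j with
    | zero =>
      have hT : T 0 = Set.univ := by simp [T]
      have hstart : ∫⁻ ω, h 0 (X 0 ω) ∂μ = ∫⁻ _, h 0 x ∂μ :=
        lintegral_congr_ae (hX.ae_eq_start.mono fun ω hω => congrArg (h 0) hω)
      rw [hT, Measure.restrict_univ, hstart, lintegral_const, measure_univ, mul_one]
    | succ j ih =>
      have hpast : MeasurableSet {v : Fin (j + 1) → E | ∀ i : Fin (j + 1), h i (v i) ≠ 0} := by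
        simp only [Set.ofPred_forall]
        exact .iInter fun i => (hm i).comp (measurable_pi_apply i) (measurableSet_singleton 0).compl
      calc h 0 x ≤ ∫⁻ ω in T j, h j (X j ω) ∂μ := ih (by omega)
        _ = ∫⁻ ω in T (j + 1), h j (X j ω) ∂μ := by
          have hsupp : MeasurableSet {ω | h j (X j ω) ≠ 0} :=
            (hm j).comp (hX.measurable j) (measurableSet_singleton 0).compl
          rw [hTsucc, Set.inter_comm, ← setLIntegral_indicator hsupp]
          exact congrArg _ (Set.indicator_support (f := fun ω => h j (X j ω))).symm
        _ ≤ ∫⁻ ω in T (j + 1), ∫⁻ w, h (j + 1) w ∂(P (X j ω)) ∂μ :=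
          lintegral_mono fun ω => hsub j (by omega) _
        _ = ∫⁻ ω in T (j + 1), h (j + 1) (X (j + 1) ω) ∂μ :=
          (hX.lintegral_restrict_succ j hpast
            (by ext ω; simp [T, Fin.forall_iff]) (hm _)).symm
  calc h 0 x ≤ ∫⁻ ω in T K, h K (X K ω) ∂μ := hkilled K le_rfl
    _ ≤ ∫⁻ _ in T K, 1 ∂μ := lintegral_mono fun ω => hle _
    _ = μ (T K) := setLIntegral_one _

end IsMChain

end Chain

section Coupling

/-- A weakening of `Achievable` that suffices for convergence: for all `x, y` some coupling of the
chains started at `x` and `y` hits `H` almost surely, where only each coordinate, and not the pair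
process, is required to be a Markov chain. -/
def CouplingAchievable {E : Type*} [MeasurableSpace E] (P : Kernel E E)
    (H : Set (E × E)) : Prop :=
  ∀ x y : E, ∃ (Ω : Type) (_ : MeasurableSpace Ω) (μ : Measure Ω) (X Y : ℕ → Ω → E),
    IsMChain P x μ X ∧ IsMChain P y μ Y ∧ ∀ᵐ ω ∂μ, ∃ n, (X n ω, Y n ω) ∈ H

theorem Achievable.couplingAchievable {E : Type*} [MeasurableSpace E] {P : Kernel E E}
    {H : Set (E × E)} (hH : Achievable P H) : CouplingAchievable P H := fun x y =>
  let ⟨Ω, mΩ, μ, X, Y, ⟨hX, hY, _⟩, hhit⟩ := hH x y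
  ⟨Ω, mΩ, μ, X, Y, hX, hY, hhit⟩

variable {E : Type*} [MeasurableSpace E] {P : Kernel E E} {H : Set (E × E)}

namespace CouplingAchievable

theorem mono {H' : Set (E × E)} (hH : CouplingAchievable P H) (hHH' : H ⊆ H') :
    CouplingAchievable P H' := fun x y =>
  let ⟨Ω, mΩ, μ, X, Y, hX, hY, hhit⟩ := hH x y
  ⟨Ω, mΩ, μ, X, Y, hX, hY, hhit.mono fun _ ⟨n, hn⟩ => ⟨n, hHH' hn⟩⟩

theorem preimage_swap (hH : CouplingAchievable P H) :
    CouplingAchievable P (Prod.swap ⁻¹' H) := fun x y =>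
  let ⟨Ω, mΩ, μ, X, Y, hX, hY, hhit⟩ := hH y x
  ⟨Ω, mΩ, μ, Y, X, hY, hX, hhit⟩

end CouplingAchievable

section Variance

variable [Preorder E] [IsMarkovKernel P]

theorem CouplingAchievable.exists_enorm_sub_sq_le
    (hH : CouplingAchievable P {p : E × E | p.1 ≤ p.2}) (x y : E) :
    ∃ C : ℝ≥0∞, C ≠ ∞ ∧ ∃ k, ∀ g : E → ℝ, IsMonotoneTest g →
      transition P k g y ≤ transition P k g x →
      ‖transition P k g x - transition P k g y‖ₑ ^ 2 ≤
        C * (eVar[g; kpow P k x] + eVar[g; kpow P k y]) := by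
  obtain ⟨Ω, _, μ, X, Y, hX, hY, hhit⟩ := hH x y
  have := hX.isProbabilityMeasure
  obtain ⟨k, hk⟩ : ∃ k, μ {ω | X k ω ≤ Y k ω} ≠ 0 := by
    by_contra! hnull
    have hmiss : ∀ᵐ ω ∂μ, ∀ k, ¬ X k ω ≤ Y k ω :=
      ae_all_iff.2 fun k => measure_eq_zero_iff_ae_notMem.1 (hnull k)
    obtain ⟨ω, ⟨k, hk⟩, hω⟩ := (hhit.and hmiss).exists
    exact hω k hk
  refine ⟨4 / μ {ω | X k ω ≤ Y k ω}, ENNReal.div_ne_top (by simp) hk, k, fun g hg hyx => ?_⟩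
  have hUV : {ω | X k ω ≤ Y k ω} ⊆ {ω | g (X k ω) ≤ g (Y k ω)} := fun ω hω => hg.monotone hω
  have hmean {z : E} {Z : ℕ → Ω → E} (hZ : IsMChain P z μ Z) :
      transition P k g z = ∫ ω, g (Z k ω) ∂μ := by
    rw [transition, ← hZ.map_eq_kpow, integral_map (hZ.measurable k).aemeasurable
      hg.measurable.aestronglyMeasurable]
  have hvar {z : E} {Z : ℕ → Ω → E} (hZ : IsMChain P z μ Z) :
      eVar[g; kpow P k z] = eVar[g ∘ Z k; μ] := by
    rw [← hZ.map_eq_kpow, evariance_map hg.measurable.aemeasurable (hZ.measurable k).aemeasurable]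
  rw [hmean hX, hmean hY] at hyx ⊢
  rw [hvar hX, hvar hY, ← ENNReal.mul_div_right_comm, ENNReal.le_div_iff_mul_le (.inl hk)
    (.inl (measure_ne_top _ _))]
  have hmeas {Z : Ω → E} (hZ : Measurable Z) : AEStronglyMeasurable (g ∘ Z) μ :=
    (hg.measurable.comp hZ).aestronglyMeasurable
  exact (mul_le_mul_right (measure_mono hUV) _).trans <| enorm_sub_sq_mul_measure_le_evariance
    (hmeas (hX.measurable k)) (hmeas (hY.measurable k)) hyx

theorem CouplingAchievable.exists_enorm_sub_sq_le_mul_sum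
    (hH : CouplingAchievable P {p : E × E | p.1 ≤ p.2}) (hmono : MonotoneKernel P) (x y : E) :
    ∃ N : ℕ, ∀ n ≥ N, ∀ g : E → ℝ, IsMonotoneTest g →
      ‖transition P n g x - transition P n g y‖ₑ ^ 2 ≤
        N * ∑ k ∈ Finset.range N, (eVar[transition P (n - k) g; kpow P k x] +
          eVar[transition P (n - k) g; kpow P k y]) := by
  obtain ⟨C, hC, k, hxy⟩ := hH.exists_enorm_sub_sq_le x y
  obtain ⟨C', hC', k', hyx⟩ := hH.exists_enorm_sub_sq_le y x
  obtain ⟨c, hc⟩ := ENNReal.exists_nat_gt hC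
  obtain ⟨c', hc'⟩ := ENNReal.exists_nat_gt hC'
  let N := max (max c c') (max k k' + 1)
  refine ⟨N, fun n hn g hg => ?_⟩
  let W (j : ℕ) : ℝ≥0∞ :=
    eVar[transition P (n - j) g; kpow P j x] + eVar[transition P (n - j) g; kpow P j y]
  have hsplit (j : ℕ) (hj : j < N) :
      transition P n g = transition P j (transition P (n - j) g) := by
    rw [← transition_add j (n - j) fun _ => hg.integrable _, Nat.add_sub_cancel' (by omega)]
  have hW (D : ℝ≥0∞) (j : ℕ) (hD : D ≤ N) (hj : j < N) :
      D * W j ≤ N * ∑ j ∈ Finset.range N, W j :=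
    mul_le_mul' hD (Finset.single_le_sum_of_canonicallyOrdered (Finset.mem_range.2 hj))
  rcases le_total (transition P n g y) (transition P n g x) with hle | hle
  · have hk : k < N := by omega
    refine le_trans ?_ (hW C k (hc.le.trans (by exact_mod_cast by omega)) hk)
    rw [hsplit k hk] at hle ⊢
    exact hxy _ (hg.transition hmono _) hle
  · have hk : k' < N := by omega
    refine le_trans ?_ (hW C' k' (hc'.le.trans (by exact_mod_cast by omega)) hk)
    rw [hsplit k' hk] at hle ⊢
    rw [enorm_sub_rev, show W k' = _ from add_comm _ _]
    exact hyx _ (hg.transition hmono _) hle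

end Variance
end Coupling

section MaxVariance

variable {E : Type*} [MeasurableSpace E] [Preorder E] {P : Kernel E E} {π : Measure E}

/-- The largest variance under `π` of `Pⁿ g` over test functions `g ∈ G`. It is taken in `ℝ≥0∞` so
that the supremum needs no boundedness side condition. -/
noncomputable def maxEVariance (P : Kernel E E) (π : Measure E) (n : ℕ) : ℝ≥0∞ :=
  ⨆ g : {g : E → ℝ // IsMonotoneTest g}, eVar[transition P n g; π]

theorem evariance_transition_le_maxEVariance {g : E → ℝ} (hg : IsMonotoneTest g) (n : ℕ) :
    eVar[transition P n g; π] ≤ maxEVariance P π n :=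
  le_iSup (fun g : {g : E → ℝ // IsMonotoneTest g} => eVar[transition P n g; π]) ⟨g, hg⟩

variable [IsMarkovKernel P]

theorem maxEVariance_antitone (hmono : MonotoneKernel P) : Antitone (maxEVariance P π) := by
  refine antitone_nat_of_succ_le fun n => iSup_le fun ⟨g, hg⟩ => ?_
  rw [transition_add n 1 fun _ => hg.integrable _]
  exact evariance_transition_le_maxEVariance (hg.transition hmono 1) n

variable [IsProbabilityMeasure π]

theorem maxEVariance_le_one (hmono : MonotoneKernel P) (n : ℕ) : maxEVariance P π n ≤ 1 := by
  refine iSup_le fun ⟨g, hg⟩ => ?_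
  have hng := hg.transition hmono n
  calc eVar[transition P n g; π]
      ≤ ∫⁻ z, ‖transition P n g z - 0‖ₑ ^ 2 ∂π :=
        evariance_le_lintegral_enorm_sub_sq (hng.integrable π) 0
    _ ≤ ∫⁻ _, 1 ∂π := lintegral_mono fun z =>
        enorm_sub_sq_le_one (hng.mem_Icc z) (Set.left_mem_Icc.2 zero_le_one)
    _ = 1 := by simp

theorem exists_maxEVariance_le_add (hmono : MonotoneKernel P) (n : ℕ) {ε : ℝ≥0∞} (hε : ε ≠ 0) :
    ∃ g : E → ℝ, IsMonotoneTest g ∧ maxEVariance P π n ≤ eVar[transition P n g; π] + ε := by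
  by_contra! hlt
  have : Nonempty {g : E → ℝ // IsMonotoneTest g} :=
    ⟨_, .indicator_one MeasurableSet.univ isUpperSet_univ⟩
  have hle : maxEVariance P π n + ε ≤ maxEVariance P π n := by
    conv_lhs => rw [maxEVariance, ENNReal.iSup_add]
    exact iSup_le fun ⟨g, hg⟩ => (hlt g hg).le
  have htop : maxEVariance P π n ≠ ∞ :=
    ne_top_of_le_ne_top ENNReal.one_ne_top (maxEVariance_le_one hmono n)
  exact (ENNReal.lt_add_right htop hε).not_ge hle

theorem lintegral_evariance_add_evariance (hπ : P ∘ₘ π = π) {g : E → ℝ} (hg : IsMonotoneTest g)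
    (k : ℕ) : ∫⁻ x, eVar[g; kpow P k x] ∂π + eVar[transition P k g; π] = eVar[g; π] := by
  have htotal := evariance_comp (μ := π) (κ := kpow P k) hg.measurable (hg.integrable _)
  rw [kpow_comp_of_stationary hπ] at htotal
  exact htotal.symm

theorem tendsto_lintegral_evariance_of_nearly_maximal (hmono : MonotoneKernel P)
    (hπ : P ∘ₘ π = π) {g : ℕ → E → ℝ} (hg : ∀ n, IsMonotoneTest (g n)) {ε : ℕ → ℝ≥0∞}
    (hε : Tendsto ε atTop (𝓝 0))
    (hmax : ∀ n, maxEVariance P π n ≤ eVar[transition P n (g n); π] + ε n) (k : ℕ) :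
    Tendsto (fun n => ∫⁻ x, eVar[transition P (n - k) (g n); kpow P k x] ∂π) atTop (𝓝 0) := by
  set Θ := maxEVariance P π
  have hfin (n : ℕ) : Θ n ≠ ∞ :=
    ne_top_of_le_ne_top ENNReal.one_ne_top (maxEVariance_le_one hmono n)
  have hL : Tendsto Θ atTop (𝓝 (⨅ n, Θ n)) := tendsto_atTop_iInf (maxEVariance_antitone hmono)
  have hLfin : ⨅ n, Θ n ≠ ∞ := ne_top_of_le_ne_top (hfin 0) (iInf_le _ 0)
  have hgap : Tendsto (fun n => Θ (n - k) + ε n - Θ n) atTop (𝓝 0) := by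
    have := ENNReal.Tendsto.sub ((hL.comp (tendsto_sub_atTop_nat k)).add hε) hL
      (.inr hLfin)
    simpa using this
  refine tendsto_of_tendsto_of_tendsto_of_le_of_le' tendsto_const_nhds hgap
    (Eventually.of_forall fun _ => zero_le) ((eventually_ge_atTop k).mono fun n hn => ?_)
  refine ENNReal.le_sub_of_add_le_right (hfin n) ?_
  have hF : transition P n (g n) = transition P k (transition P (n - k) (g n)) := by
    rw [← transition_add k (n - k) fun _ => (hg n).integrable _, Nat.add_sub_cancel' hn]
  calc ∫⁻ x, eVar[transition P (n - k) (g n); kpow P k x] ∂π + Θ n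
      ≤ ∫⁻ x, eVar[transition P (n - k) (g n); kpow P k x] ∂π
          + (eVar[transition P n (g n); π] + ε n) := by gcongr; exact hmax n
    _ = eVar[transition P (n - k) (g n); π] + ε n := by
        rw [← add_assoc, hF,
          lintegral_evariance_add_evariance hπ ((hg n).transition hmono (n - k)) k]
    _ ≤ Θ (n - k) + ε n := by
        gcongr
        exact evariance_transition_le_maxEVariance (hg n) _

theorem CouplingAchievable.tendsto_maxEVariance
    (hH : CouplingAchievable P {p : E × E | p.1 ≤ p.2}) (hmono : MonotoneKernel P)
    (hπ : P ∘ₘ π = π) : Tendsto (maxEVariance P π) atTop (𝓝 0) := by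
  let ε (n : ℕ) : ℝ≥0∞ := (n : ℝ≥0∞)⁻¹
  have hε : Tendsto ε atTop (𝓝 0) := ENNReal.tendsto_inv_nat_nhds_zero
  have hsel (n : ℕ) := exists_maxEVariance_le_add (π := π) hmono n
    (ENNReal.inv_ne_zero.2 (ENNReal.natCast_ne_top n))
  choose g hg hmax using hsel
  let W (k n : ℕ) (z : E) : ℝ≥0∞ := eVar[transition P (n - k) (g n); kpow P k z]
  have hWm (k n : ℕ) : Measurable (W k n) :=
    measurable_evariance_kernel ((hg n).transition hmono _).measurable
  have hW (k : ℕ) : Tendsto (fun n => ∫⁻ z, W k n z ∂π) atTop (𝓝 0) :=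
    tendsto_lintegral_evariance_of_nearly_maximal hmono hπ hg hε hmax k
  have hW2 (k : ℕ) : Tendsto (fun n => ∫⁻ p, (W k n p.1 + W k n p.2) ∂(π.prod π)) atTop (𝓝 0) := by
    have := (hW k).add (hW k)
    rw [add_zero] at this
    exact this.congr fun n => (lintegral_prod_add (hWm k n) (hWm k n)).symm
  have hFm (n : ℕ) := (hg n).transition hmono n
  have hdiff : Tendsto (fun n => ∫⁻ p, ‖transition P n (g n) p.1 - transition P n (g n) p.2‖ₑ ^ 2
      ∂(π.prod π)) atTop (𝓝 0) := by
    refine tendsto_lintegral_zero_of_eventually_le_mul_sum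
      (W := fun k n p => W k n p.1 + W k n p.2) ENNReal.one_ne_top (fun n => ?_)
      (fun n p => enorm_sub_sq_le_one ((hFm n).mem_Icc _) ((hFm n).mem_Icc _))
      (fun k n => ?_) hW2 (ae_of_all _ fun p => ?_)
    · have := (hFm n).measurable
      fun_prop
    · exact ((hWm k n).comp measurable_fst).add ((hWm k n).comp measurable_snd)
    · obtain ⟨N, hN⟩ := hH.exists_enorm_sub_sq_le_mul_sum hmono p.1 p.2
      exact ⟨N, fun n hn => hN n hn (g n) (hg n)⟩
  have hlim := hdiff.add hε
  rw [add_zero] at hlim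
  refine tendsto_of_tendsto_of_tendsto_of_le_of_le tendsto_const_nhds hlim (fun _ => zero_le)
    fun n => (hmax n).trans ?_
  gcongr
  exact evariance_le_lintegral_prod_enorm_sub_sq (hFm n).measurable ((hFm n).integrable π)

end MaxVariance

section Meeting

variable {E : Type*} [MeasurableSpace E] {P : Kernel E E} {H : Set (E × E)} {π : Measure E}

theorem exists_measure_forall_lt_notMem_le {α Ω : Type*} [MeasurableSpace α] [MeasurableSpace Ω]
    {μ : Measure Ω} [IsFiniteMeasure μ] {Z : ℕ → Ω → α} (hZ : ∀ n, Measurable (Z n)) {S : Set α}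
    (hS : MeasurableSet S) (hhit : ∀ᵐ ω ∂μ, ∃ n, Z n ω ∈ S) {δ : ℝ≥0∞} (hδ : 0 < δ) :
    ∃ K, μ {ω | ∀ k < K, Z k ω ∉ S} ≤ δ := by
  let B (K : ℕ) : Set Ω := {ω | ∀ k < K, Z k ω ∉ S}
  have hBm (K : ℕ) : MeasurableSet (B K) := by
    simp only [B, Set.ofPred_forall]
    exact .iInter fun k => .iInter fun _ => hZ k hS.compl
  have hanti : Antitone B := fun _ _ hKL _ hω k hk => hω k (hk.trans_le hKL)
  have hnull : μ (⋂ K, B K) = 0 := by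
    refine measure_mono_null (fun ω hω => ?_) hhit
    rintro ⟨n, hn⟩
    exact Set.mem_iInter.1 hω (n + 1) n n.lt_succ_self hn
  have hlim := tendsto_measure_iInter_atTop (fun K => (hBm K).nullMeasurableSet) hanti
    ⟨0, measure_ne_top μ _⟩
  rw [hnull] at hlim
  exact (ENNReal.tendsto_nhds_zero.1 hlim δ hδ).exists

variable [IsMarkovKernel P]

theorem CouplingAchievable.exists_le_add_sum_kpow (hH : CouplingAchievable P H)
    {h : ℕ → ℕ → E → ℝ≥0∞} (hm : ∀ n k, Measurable (h n k)) (hle : ∀ n k z, h n k z ≤ 1)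
    (hsub : ∀ n, ∀ k < n, ∀ z, h n k z ≤ ∫⁻ w, h n (k + 1) w ∂(P z))
    (hdom : ∀ n k, ∀ p ∈ H, h n k p.1 ≤ h n k p.2) (x y : E) {δ : ℝ≥0∞} (hδ : 0 < δ) :
    ∃ K, ∀ n ≥ K, h n 0 x ≤ δ + ∑ k ∈ Finset.range K, kpow P k y {z | h n k z ≠ 0} := by
  -- `H` itself need not be measurable.
  let H' : Set (E × E) := {p | ∀ n k, h n k p.1 ≤ h n k p.2}
  have hH'm : MeasurableSet H' := by
    simp only [H', Set.ofPred_forall]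
    exact .iInter fun n => .iInter fun k =>
      measurableSet_le ((hm n k).comp measurable_fst) ((hm n k).comp measurable_snd)
  obtain ⟨Ω, _, μ, X, Y, hX, hY, hhit⟩ :=
    hH.mono (H' := H') (fun p hp n k => hdom n k p hp) x y
  have := hX.isProbabilityMeasure
  obtain ⟨K, hK⟩ := exists_measure_forall_lt_notMem_le
    (fun n => (hX.measurable n).prodMk (hY.measurable n)) hH'm hhit hδ
  refine ⟨K, fun n hn => ?_⟩
  have hsupp (k : ℕ) : MeasurableSet {z | h n k z ≠ 0} :=
    hm n k (measurableSet_singleton 0).compl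
  have hcover : {ω | ∀ k < K, h n k (X k ω) ≠ 0} ⊆ {ω | ∀ k < K, (X k ω, Y k ω) ∉ H'} ∪
      ⋃ k ∈ Finset.range K, Y k ⁻¹' {z | h n k z ≠ 0} := by
    intro ω hω
    by_cases hmeet : ∃ k < K, (X k ω, Y k ω) ∈ H'
    · obtain ⟨k, hk, hkH⟩ := hmeet
      refine .inr (Set.mem_biUnion (Finset.mem_coe.2 (Finset.mem_range.2 hk)) ?_)
      exact ((pos_iff_ne_zero.2 (hω k hk)).trans_le (hkH n k)).ne'
    · exact .inl fun k hk hkH => hmeet ⟨k, hk, hkH⟩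
  calc h n 0 x ≤ μ {ω | ∀ k < K, h n k (X k ω) ≠ 0} :=
        hX.le_measure_forall_ne_zero (hm n) (hle n K) fun k hk => hsub n k (hk.trans_le hn)
    _ ≤ μ {ω | ∀ k < K, (X k ω, Y k ω) ∉ H'} +
          ∑ k ∈ Finset.range K, μ (Y k ⁻¹' {z | h n k z ≠ 0}) :=
        (measure_mono hcover).trans <| (measure_union_le _ _).trans <|
          add_le_add_right (measure_biUnion_finset_le _ _) _
    _ ≤ δ + ∑ k ∈ Finset.range K, kpow P k y {z | h n k z ≠ 0} := by
        refine add_le_add hK (Finset.sum_le_sum fun k _ => ?_)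
        rw [← hY.map_eq_kpow, Measure.map_apply (hY.measurable k) (hsupp k)]

theorem CouplingAchievable.tendsto_zero [IsProbabilityMeasure π] (hH : CouplingAchievable P H)
    (hπ : P ∘ₘ π = π) {h : ℕ → ℕ → E → ℝ≥0∞} (hm : ∀ n k, Measurable (h n k))
    (hle : ∀ n k z, h n k z ≤ 1)
    (hsub : ∀ n, ∀ k < n, ∀ z, h n k z ≤ ∫⁻ w, h n (k + 1) w ∂(P z))
    (hdom : ∀ n k, ∀ p ∈ H, h n k p.1 ≤ h n k p.2)
    (hlim : ∀ k, Tendsto (fun n => π {z | h n k z ≠ 0}) atTop (𝓝 0)) (x : E) :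
    Tendsto (fun n => h n 0 x) atTop (𝓝 0) := by
  have hsupp (n k : ℕ) : MeasurableSet {z | h n k z ≠ 0} :=
    hm n k (measurableSet_singleton 0).compl
  have hkpow (k : ℕ) :
      Tendsto (fun n => ∫⁻ y, kpow P k y {z | h n k z ≠ 0} ∂π) atTop (𝓝 0) := by
    refine (hlim k).congr fun n => ?_
    rw [← Measure.bind_apply (hsupp n k) (kpow P k).aemeasurable, kpow_comp_of_stationary hπ]
  have hexcess {δ : ℝ≥0∞} (hδ : 0 < δ) : Tendsto (fun n => h n 0 x - δ) atTop (𝓝 0) := by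
    have := tendsto_lintegral_zero_of_eventually_le_mul_sum (ν := π) (C := 1)
      (f := fun n _ => h n 0 x - δ) (W := fun k n y => kpow P k y {z | h n k z ≠ 0})
      ENNReal.one_ne_top (fun n => measurable_const) (fun n _ => tsub_le_self.trans (hle n 0 x))
      (fun k n => (kpow P k).measurable_coe (hsupp n k)) hkpow (ae_of_all _ fun y => ?_)
    · simpa using this
    obtain ⟨K, hK⟩ := hH.exists_le_add_sum_kpow hm hle hsub hdom x y hδ
    refine ⟨K + 1, fun n hn => tsub_le_iff_left.2 ((hK n (by omega)).trans ?_)⟩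
    gcongr
    calc ∑ k ∈ Finset.range K, kpow P k y {z | h n k z ≠ 0}
        ≤ ∑ k ∈ Finset.range (K + 1), kpow P k y {z | h n k z ≠ 0} := by gcongr; omega
      _ ≤ (K + 1 : ℕ) * ∑ k ∈ Finset.range (K + 1), kpow P k y {z | h n k z ≠ 0} :=
        le_mul_of_one_le_left zero_le (by simp)
  refine ENNReal.tendsto_nhds_zero.2 fun ε hε => ?_
  have hε2 : 0 < ε / 2 := ENNReal.half_pos hε.ne'
  filter_upwards [ENNReal.tendsto_nhds_zero.1 (hexcess hε2) _ hε2] with n hn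
  exact (tsub_le_iff_right.1 hn).trans_eq (ENNReal.add_halves ε)

theorem CouplingAchievable.eventually_le [IsProbabilityMeasure π] (hH : CouplingAchievable P H)
    (hπ : P ∘ₘ π = π) {u : ℕ → ℕ → E → ℝ} (hm : ∀ n k, Measurable (u n k))
    (hbdd : ∀ n k z, |u n k z| ≤ 1)
    (hharm : ∀ n, ∀ k < n, ∀ z, u n k z = ∫ w, u n (k + 1) w ∂(P z))
    (hdom : ∀ n k, ∀ p ∈ H, u n k p.1 ≤ u n k p.2)
    (hlim : ∀ k, TendstoInMeasure π (fun n => u n k) atTop 0)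
    (x : E) {ε : ℝ} (hε : 0 < ε) : ∀ᶠ n in atTop, u n 0 x ≤ ε := by
  have hε2 : 0 < ε / 2 := half_pos hε
  have hint (n k : ℕ) (z : E) : Integrable (u n k) (P z) :=
    .of_bound (hm n k).aestronglyMeasurable 1 (ae_of_all _ (hbdd n k))
  have htrunc := hH.tendsto_zero hπ (h := fun n k z => ENNReal.ofReal (u n k z - ε / 2))
    (fun n k => ((hm n k).sub_const _).ennreal_ofReal)
    (fun n k z => ENNReal.ofReal_le_one.2 (by linarith [(abs_le.1 (hbdd n k z)).2]))
    (fun n k hk z => ?_) (fun n k p hp => ENNReal.ofReal_le_ofReal (by linarith [hdom n k p hp]))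
    (fun k => ?_) x
  · filter_upwards [ENNReal.tendsto_nhds_zero.1 htrunc _ (ENNReal.ofReal_pos.2 hε2)] with n hn
    rw [ENNReal.ofReal_le_ofReal_iff hε2.le] at hn
    linarith
  · have hmean : u n k z - ε / 2 = ∫ w, (u n (k + 1) w - ε / 2) ∂(P z) := by
      rw [integral_sub (hint n (k + 1) z) (integrable_const _), ← hharm n k hk z]
      simp
    rw [hmean]
    exact ofReal_integral_le_lintegral_ofReal ((hint n (k + 1) z).sub (integrable_const _))
  · refine tendsto_of_tendsto_of_tendsto_of_le_of_le tendsto_const_nhds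
      (tendstoInMeasure_iff_norm.1 (hlim k) _ hε2) (fun _ => zero_le) fun n => measure_mono ?_
    intro z hz
    have hpos : 0 < u n k z - ε / 2 := ENNReal.ofReal_pos.1 (pos_iff_ne_zero.2 hz)
    simpa using (by linarith : ε / 2 ≤ u n k z).trans (le_abs_self _)

end Meeting

section Convergence

variable {E : Type*} [MeasurableSpace E] [Preorder E] {P : Kernel E E} [IsMarkovKernel P]
  {π : Measure E} [IsProbabilityMeasure π]

theorem integral_transition_of_stationary (hπ : P ∘ₘ π = π) {g : E → ℝ} (hg : IsMonotoneTest g)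
    (n : ℕ) : ∫ x, transition P n g x ∂π = ∫ x, g x ∂π := by
  have hmean := integral_comp_measure (μ := π) (κ := kpow P n) (f := g) (hg.integrable _)
  rw [kpow_comp_of_stationary hπ] at hmean
  exact hmean.symm

theorem tendstoInMeasure_transition_sub_integral (hmono : MonotoneKernel P) (hπ : P ∘ₘ π = π)
    (hΘ : Tendsto (maxEVariance P π) atTop (𝓝 0)) {g : ℕ → E → ℝ}
    (hg : ∀ n, IsMonotoneTest (g n)) (k : ℕ) :
    TendstoInMeasure π (fun n x => transition P (n - k) (g n) x - ∫ z, g n z ∂π) atTop 0 := by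
  refine tendstoInMeasure_iff_norm.2 fun ε hε => ?_
  have hε2 : ENNReal.ofReal ε ^ 2 ≠ 0 := pow_ne_zero 2 (ENNReal.ofReal_pos.2 hε).ne'
  have hlim : Tendsto (fun n => maxEVariance P π (n - k) / ENNReal.ofReal ε ^ 2) atTop (𝓝 0) := by
    have := ENNReal.Tendsto.div_const (hΘ.comp (tendsto_sub_atTop_nat k)) (.inr hε2)
    rwa [ENNReal.zero_div] at this
  refine tendsto_of_tendsto_of_tendsto_of_le_of_le tendsto_const_nhds hlim (fun _ => zero_le)
    fun n => ?_
  have hng := (hg n).transition hmono (n - k)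
  have hcheb := meas_ge_le_evariance_div_sq (μ := π) hng.measurable.aestronglyMeasurable
    (c := ε.toNNReal) (Real.toNNReal_pos.2 hε).ne'
  rw [integral_transition_of_stationary hπ (hg n), Real.coe_toNNReal ε hε.le] at hcheb
  simp only [Pi.zero_apply, sub_zero, Real.norm_eq_abs]
  exact hcheb.trans <| ENNReal.div_le_div_right (evariance_transition_le_maxEVariance (hg n) _) _

theorem abs_transition_sub_integral_le_one (hmono : MonotoneKernel P) {g : E → ℝ}
    (hg : IsMonotoneTest g) (n : ℕ) (x : E) : |transition P n g x - ∫ z, g z ∂π| ≤ 1 := by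
  have hPg := (hg.transition hmono n).mem_Icc x
  have hmean : ∫ z, g z ∂π ∈ Set.Icc (0 : ℝ) 1 :=
    (convex_Icc 0 1).integral_mem isClosed_Icc (ae_of_all _ hg.mem_Icc) (hg.integrable π)
  exact abs_sub_le_of_nonneg_of_le hPg.1 hPg.2 hmean.1 hmean.2

theorem CouplingAchievable.tendsto_transition_sub_integral
    (hH : CouplingAchievable P {p : E × E | p.1 ≤ p.2}) (hmono : MonotoneKernel P)
    (hπ : P ∘ₘ π = π) {g : ℕ → E → ℝ} (hg : ∀ n, IsMonotoneTest (g n)) (x : E) :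
    Tendsto (fun n => transition P n (g n) x - ∫ z, g n z ∂π) atTop (𝓝 0) := by
  let u (n k : ℕ) (z : E) : ℝ := transition P (n - k) (g n) z - ∫ w, g n w ∂π
  have hum (n k : ℕ) : Measurable (u n k) :=
    ((hg n).transition hmono (n - k)).measurable.sub_const _
  have hbdd (n k : ℕ) (z : E) : |u n k z| ≤ 1 :=
    abs_transition_sub_integral_le_one hmono (hg n) (n - k) z
  have hharm (n k : ℕ) (hk : k < n) (z : E) : u n k z = ∫ w, u n (k + 1) w ∂(P z) := by
    have hnk : n - k = 1 + (n - (k + 1)) := by omega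
    simp only [u]
    rw [integral_sub (((hg n).transition hmono _).integrable _) (integrable_const _), hnk,
      transition_add 1 _ fun _ => (hg n).integrable _, transition, kpow_one]
    simp
  have hmon (n k : ℕ) (p : E × E) (hp : p.1 ≤ p.2) : u n k p.1 ≤ u n k p.2 :=
    sub_le_sub_right (((hg n).transition hmono (n - k)).monotone hp) _
  have hlim (k : ℕ) : TendstoInMeasure π (fun n => u n k) atTop 0 :=
    tendstoInMeasure_transition_sub_integral hmono hπ (hH.tendsto_maxEVariance hmono hπ) hg k
  refine tendsto_zero_iff_abs_tendsto_zero _ |>.2 <| tendsto_order.2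
    ⟨fun ε hε => .of_forall fun n => hε.trans_le (abs_nonneg _), fun ε hε => ?_⟩
  have hlower := hH.preimage_swap.eventually_le hπ (u := fun n k z => -u n k z)
    (fun n k => (hum n k).neg) (fun n k z => (abs_neg _).trans_le (hbdd n k z))
    (fun n k hk z => by rw [integral_neg, hharm n k hk z])
    (fun n k p hp => neg_le_neg (hmon n k p.swap hp)) (fun k => ?_) x (half_pos hε)
  · filter_upwards [hH.eventually_le hπ hum hbdd hharm hmon hlim x (half_pos hε), hlower]
      with n hupper hlower
    exact (abs_le.2 ⟨by linarith, hupper⟩).trans_lt (half_lt_self hε)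
  · simpa [tendstoInMeasure_iff_norm] using hlim k

theorem CouplingAchievable.tendsto_iSup_abs_transition_sub_integral
    (hH : CouplingAchievable P {p : E × E | p.1 ≤ p.2}) (hmono : MonotoneKernel P)
    (hπ : P ∘ₘ π = π) (x : E) :
    Tendsto (fun n => ⨆ g : {g : E → ℝ // IsMonotoneTest g},
      |transition P n g x - ∫ z, g.1 z ∂π|) atTop (𝓝 0) := by
  have : Nonempty {g : E → ℝ // IsMonotoneTest g} :=
    ⟨_, .indicator_one MeasurableSet.univ isUpperSet_univ⟩
  refine tendsto_iSup_zero_of_forall_selection (fun _ _ => abs_nonneg _) fun g => ?_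
  exact (tendsto_zero_iff_abs_tendsto_zero _).1 <|
    hH.tendsto_transition_sub_integral hmono hπ (fun n => (g n).2) x

end Convergence

section UpperSets

variable {E : Type*}

theorem generateFrom_eq_of_countable_of_separating [mE : MeasurableSpace E] [StandardBorelSpace E]
    {S : Set (Set E)} (hS : S.Countable) (hSm : ∀ s ∈ S, MeasurableSet s)
    (hsep : ∀ x y, x ≠ y → ∃ s ∈ S, ¬(x ∈ s ↔ y ∈ s)) : MeasurableSpace.generateFrom S = mE := by
  have hle : MeasurableSpace.generateFrom S ≤ mE := MeasurableSpace.generateFrom_le hSm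
  have hcs : @MeasurableSpace.CountablySeparated E (.generateFrom S) :=
    @MeasurableSpace.CountablySeparated.mk E (.generateFrom S) ⟨S, hS, fun s hs => .basic s hs,
      fun x _ y _ hxy => by_contra fun hne => let ⟨s, hs, hxys⟩ := hsep x y hne; hxys (hxy s hs)⟩
  have hmap := @Measurable.map_measurableSpace_eq E E mE _ (.generateFrom S) hcs id
    (measurable_id'' hle) Function.surjective_id
  rw [← hmap, MeasurableSpace.map_id]

variable [TopologicalSpace E] [PolishSpace E] [mE : MeasurableSpace E] [BorelSpace E]

section Preorder

variable [Preorder E] [OrderClosedTopology E]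

theorem analyticSet_upperClosure {B : Set E} (hB : MeasurableSet B) :
    AnalyticSet (upperClosure B : Set E) := by
  have himage : (upperClosure B : Set E) =
      Prod.snd '' ({p : E × E | p.1 ≤ p.2} ∩ Prod.fst ⁻¹' B) := by
    ext y
    simp [and_comm]
  rw [himage]
  exact (OrderClosedTopology.isClosed_le'.measurableSet.inter
    (measurable_fst hB)).analyticSet.image_of_continuous continuous_snd

theorem analyticSet_lowerClosure {B : Set E} (hB : MeasurableSet B) :
    AnalyticSet (lowerClosure B : Set E) := by
  have himage : (lowerClosure B : Set E) =
      Prod.fst '' ({p : E × E | p.1 ≤ p.2} ∩ Prod.snd ⁻¹' B) := by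
    ext y
    simp [and_comm]
  rw [himage]
  exact (OrderClosedTopology.isClosed_le'.measurableSet.inter
    (measurable_snd hB)).analyticSet.image_of_continuous continuous_fst

theorem exists_measurableSet_upperClosure_subset {B C : Set E} (hB : MeasurableSet B)
    (hC : AnalyticSet C) (hlow : IsLowerSet C) (hBC : Disjoint B C) :
    ∃ B', MeasurableSet B' ∧ Disjoint B' C ∧ (upperClosure B : Set E) ⊆ B' := by
  have hd : Disjoint (upperClosure B : Set E) C := by
    refine Set.disjoint_left.2 fun y ⟨x, hx, hxy⟩ hy => ?_
    exact Set.disjoint_left.1 hBC hx (hlow hxy hy)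
  obtain ⟨B', hsub, hdisj, hB'⟩ := (analyticSet_upperClosure hB).measurablySeparable hC hd
  exact ⟨B', hB', hdisj.symm, hsub⟩

theorem exists_measurableSet_isUpperSet_separating {U C : Set E} (hU : MeasurableSet U)
    (hC : AnalyticSet C) (hlow : IsLowerSet C) (hUC : Disjoint U C) :
    ∃ I, MeasurableSet I ∧ IsUpperSet I ∧ U ⊆ I ∧ Disjoint I C := by
  have hstep (B : {B : Set E // MeasurableSet B ∧ Disjoint B C}) :
      ∃ B' : {B : Set E // MeasurableSet B ∧ Disjoint B C}, (upperClosure B.1 : Set E) ⊆ B' := by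
    obtain ⟨B', hB', hB'C, hsub⟩ :=
      exists_measurableSet_upperClosure_subset B.2.1 hC hlow B.2.2
    exact ⟨⟨B', hB', hB'C⟩, hsub⟩
  choose F hF using hstep
  let B (n : ℕ) := F^[n] ⟨U, hU, hUC⟩
  refine ⟨⋃ n, (B n).1, .iUnion fun n => (B n).2.1, fun x y hxy hx => ?_,
    Set.subset_iUnion (fun n => (B n).1) 0, Set.disjoint_iUnion_left.2 fun n => (B n).2.2⟩
  obtain ⟨n, hn⟩ := Set.mem_iUnion.1 hx
  refine Set.mem_iUnion.2 ⟨n + 1, ?_⟩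
  rw [show B (n + 1) = F (B n) from Function.iterate_succ_apply' _ _ _]
  exact hF _ ⟨x, hn, hxy⟩

variable (E) in
theorem exists_countable_isUpperSet_separating :
    ∃ S : Set (Set E), S.Countable ∧ (∀ I ∈ S, MeasurableSet I ∧ IsUpperSet I) ∧
      ∀ x y, ¬ x ≤ y → ∃ I ∈ S, x ∈ I ∧ y ∉ I := by
  let b := TopologicalSpace.countableBasis E
  have hb : TopologicalSpace.IsTopologicalBasis b := TopologicalSpace.isBasis_countableBasis E
  have hchoice (p : Set E × Set E) : ∃ I, (MeasurableSet I ∧ IsUpperSet I) ∧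
      (p ∈ b ×ˢ b → Disjoint p.1 (lowerClosure p.2) → p.1 ⊆ I ∧ Disjoint I p.2) := by
    by_cases hp : p ∈ b ×ˢ b ∧ Disjoint p.1 (lowerClosure p.2)
    · obtain ⟨⟨h₁, h₂⟩, hd⟩ := hp
      obtain ⟨I, hI, hI', hsub, hdisj⟩ := exists_measurableSet_isUpperSet_separating
        (hb.isOpen h₁).measurableSet (analyticSet_lowerClosure (hb.isOpen h₂).measurableSet)
        (lowerClosure p.2).lower hd
      exact ⟨I, ⟨hI, hI'⟩, fun _ _ => ⟨hsub, hdisj.mono_right subset_lowerClosure⟩⟩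
    · exact ⟨∅, ⟨.empty, isUpperSet_empty⟩, fun h₁ h₂ => absurd ⟨h₁, h₂⟩ hp⟩
  choose I hI hsep using hchoice
  have hbc : b.Countable := TopologicalSpace.countable_countableBasis E
  refine ⟨I '' (b ×ˢ b), (hbc.prod hbc).image I, Set.forall_mem_image.2 fun p _ => hI p,
    fun x y hxy => ?_⟩
  obtain ⟨u, v, hu, hv, hxu, hyv, huv⟩ :=
    isOpen_prod_iff.1 (OrderClosedTopology.isClosed_le' (α := E)).isOpen_compl x y hxy
  obtain ⟨u', hu', hxu', hu'u⟩ := hb.exists_subset_of_mem_open hxu hu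
  obtain ⟨v', hv', hyv', hv'v⟩ := hb.exists_subset_of_mem_open hyv hv
  have hd : Disjoint u' (lowerClosure v' : Set E) := by
    refine Set.disjoint_left.2 fun a ha ⟨c, hc, hac⟩ => ?_
    exact huv (Set.mk_mem_prod (hu'u ha) (hv'v hc)) hac
  obtain ⟨hsub, hdisj⟩ := hsep (u', v') ⟨hu', hv'⟩ hd
  exact ⟨_, Set.mem_image_of_mem I ⟨hu', hv'⟩, hsub hxu', Set.disjoint_right.1 hdisj hyv'⟩

end Preorder

variable [PartialOrder E] [OrderClosedTopology E]

theorem generateFrom_measurableSet_isUpperSet :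
    MeasurableSpace.generateFrom {I : Set E | MeasurableSet I ∧ IsUpperSet I} = mE := by
  obtain ⟨S, hS, hSI, hsep⟩ := exists_countable_isUpperSet_separating E
  have hgen : MeasurableSpace.generateFrom S = mE := by
    refine generateFrom_eq_of_countable_of_separating hS (fun I hI => (hSI I hI).1)
      fun x y hne => ?_
    by_contra! hsame
    refine hne (le_antisymm ?_ ?_) <;> by_contra hle <;>
      obtain ⟨I, hI, hin, hnotin⟩ := hsep _ _ hle
    · exact hnotin ((hsame I hI).1 hin)
    · exact hnotin ((hsame I hI).2 hin)
  exact le_antisymm (MeasurableSpace.generateFrom_le fun I hI => hI.1)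
    (hgen.ge.trans (MeasurableSpace.generateFrom_mono hSI))

theorem ext_of_measurableSet_isUpperSet {μ ν : Measure E} [IsFiniteMeasure μ]
    (h : ∀ I, MeasurableSet I → IsUpperSet I → μ I = ν I) : μ = ν :=
  ext_of_generate_finite _ generateFrom_measurableSet_isUpperSet.symm
    (fun _ hI _ hJ _ => ⟨hI.1.inter hJ.1, hI.2.inter hJ.2⟩) (fun I hI => h I hI.1 hI.2)
    (h _ .univ isUpperSet_univ)

end UpperSets

theorem eq_of_tendsto_transition {E : Type*} [TopologicalSpace E] [PolishSpace E]
    [MeasurableSpace E] [BorelSpace E] [PartialOrder E] [OrderClosedTopology E] {P : Kernel E E}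
    {μ ν : Measure E} [IsFiniteMeasure μ] [IsFiniteMeasure ν] {x : E}
    (hμ : ∀ g, IsMonotoneTest g →
      Tendsto (fun n => transition P n g x) atTop (𝓝 (∫ z, g z ∂μ)))
    (hν : ∀ g, IsMonotoneTest g →
      Tendsto (fun n => transition P n g x) atTop (𝓝 (∫ z, g z ∂ν))) : μ = ν := by
  refine ext_of_measurableSet_isUpperSet fun I hI hI' => ?_
  have hg := IsMonotoneTest.indicator_one hI hI'
  have hreal := tendsto_nhds_unique (hμ _ hg) (hν _ hg)
  rw [← measureReal_eq_measureReal_iff]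
  simpa only [integral_indicator_const (1 : ℝ) hI, smul_eq_mul, mul_one] using hreal

theorem stmt8_general {E : Type*} [TopologicalSpace E] [PolishSpace E] [MeasurableSpace E]
    [BorelSpace E] [PartialOrder E] [OrderClosedTopology E] (P : Kernel E E) [IsMarkovKernel P]
    (hmono : MonotoneKernel P) (hH : CouplingAchievable P {p : E × E | p.1 ≤ p.2})
    (π : Measure E) [IsProbabilityMeasure π] (hπ : P ∘ₘ π = π) :
    (∀ π' : Measure E, IsProbabilityMeasure π' → P ∘ₘ π' = π' → π' = π) ∧
    ∀ x : E, Tendsto (fun n => ⨆ g : {g : E → ℝ // IsMonotoneTest g},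
      |∫ z, g.1 z ∂(kpow P n x) - ∫ z, g.1 z ∂π|) atTop (𝓝 0) := by
  refine ⟨fun π' _ hπ' => ?_, hH.tendsto_iSup_abs_transition_sub_integral hmono hπ⟩
  obtain ⟨x⟩ : Nonempty E := nonempty_of_isProbabilityMeasure π
  exact eq_of_tendsto_transition
    (fun g hg => tendsto_sub_nhds_zero_iff.1 <|
      hH.tendsto_transition_sub_integral hmono hπ' (fun _ => hg) x)
    (fun g hg => tendsto_sub_nhds_zero_iff.1 <|
      hH.tendsto_transition_sub_integral hmono hπ (fun _ => hg) x)

/-- Theorem 3.4 ii: if `M` is achievable for a monotone kernel `P` and a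
stationary distribution `π` exists, then `π` is the unique stationary distribution and,
for each `x`, `sup_{g ∈ G} |E g(Xₙˣ) − ∫ g dπ| → 0` as `n → ∞`. -/
theorem stmt8 {E : Type*} [MetricSpace E] [PolishSpace E] [MeasurableSpace E] [BorelSpace E]
    [PartialOrder E] [OrderClosedTopology E]
    (P : Kernel E E) [IsMarkovKernel P] (hmono : MonotoneKernel P)
    (hach : Achievable P {p : E × E | p.1 ≤ p.2})
    (π : Measure E) [IsProbabilityMeasure π] (hstat : π.bind (fun a => P a) = π) :
    (∀ π' : Measure E, IsProbabilityMeasure π' → π'.bind (fun a => P a) = π' → π' = π) ∧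
    ∀ x : E,
      Tendsto
        (fun n =>
          ⨆ g : {g : E → ℝ // Measurable g ∧ Monotone g ∧ ∀ z, g z ∈ Set.Icc (0 : ℝ) 1},
            |∫ z, g.1 z ∂(kpow P n x) - ∫ z, g.1 z ∂π|)
        atTop (nhds 0) :=
  stmt8_general P hmono hach.couplingAchievable π hstat
end

section
/- There exist an ordered Polish space E and a monotone Markov kernel P on E such that the set M = {(x,y) : x ⪯ y} is achievable and, for every x ∈ E, the family of laws of Xₙˣ, n ≥ 0, is tight, yet P admits no stationary distribution. -/
open MeasureTheory ProbabilityTheory Filter Topology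

/-! Fix an enumeration of a countably infinite compact space, order the space trivially, and let
the chain be the running maximum, in the enumeration, of its starting point and of i.i.d. noise of
unbounded support. Two chains driven by the same noise agree as soon as one noise value exceeds both
starting ranks, so the diagonal is reached almost surely. From a state of rank below `N` the chain
stays below `N` with a probability `c < 1` not depending on the state, and it never returns, so a
stationary `π` satisfies `π {rank < N} ≤ c * π {rank < N}` and hence vanishes. Tightness comes from
compactness: the topology has nothing to do with the enumeration. -/

section RandomMap

variable {S T Z Ω : Type*}

/-- The chain started at `s` that moves by `F` with noise `ω n` at time `n`, as a function of the
whole noise sequence `ω`. -/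
def randomMapChain (F : S → Z → S) (s : S) : ℕ → (ℕ → Z) → S
  | 0, _ => s
  | n + 1, ω => F (randomMapChain F s n ω) (ω n)

lemma randomMapChain_prodMk (F : S → Z → S) (G : T → Z → T) (s : S) (t : T) (n : ℕ) (ω : ℕ → Z) :
    randomMapChain (fun p z => (F p.1 z, G p.2 z)) (s, t) n ω
      = (randomMapChain F s n ω, randomMapChain G t n ω) := by
  induction n with
  | zero => rfl
  | succ n ih => simp only [randomMapChain, ih]

variable [MeasurableSpace S] [MeasurableSpace T] [MeasurableSpace Z] [MeasurableSpace Ω]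

/-- The transition kernel of the Markov chain that moves from `s` to `F s z`, where the noise `z`
has law `ν`. -/
noncomputable def randomMapKernel (ν : Measure Z) [SFinite ν] (F : S → Z → S)
    (hF : Measurable F.uncurry) : Kernel S S where
  toFun s := ν.map (F s)
  measurable' := by
    have h : (fun s => ν.map (F s)) = fun s => (ν.map (Prod.mk s)).map F.uncurry :=
      funext fun s => (Measure.map_map hF measurable_prodMk_left).symm
    exact h ▸ (Measure.measurable_map _ hF).comp Measurable.map_prodMk_left

lemma randomMapKernel_apply_apply (ν : Measure Z) [SFinite ν] {F : S → Z → S}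
    (hF : Measurable F.uncurry) (s : S) {A : Set S} (hA : MeasurableSet A) :
    randomMapKernel ν F hF s A = ν (F s ⁻¹' A) :=
  Measure.map_apply hF.of_uncurry_left hA

instance (ν : Measure Z) [IsProbabilityMeasure ν] (F : S → Z → S) (hF : Measurable F.uncurry) :
    IsMarkovKernel (randomMapKernel ν F hF) :=
  ⟨fun _ => Measure.isProbabilityMeasure_map hF.of_uncurry_left.aemeasurable⟩

lemma integral_prodMk_of_indepFun {E : Type*} [NormedAddCommGroup E] [NormedSpace ℝ E]
    {μ : Measure Ω} [IsFiniteMeasure μ] {V : Ω → S} {U : Ω → T} (hV : Measurable V)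
    (hU : Measurable U) (hVU : IndepFun V U μ) {g : S × T → E} (hg : StronglyMeasurable g)
    (hint : Integrable (fun ω => g (V ω, U ω)) μ) :
    ∫ ω, g (V ω, U ω) ∂μ = ∫ ω, ∫ t, g (V ω, t) ∂(μ.map U) ∂μ := by
  have hlaw : μ.map (fun ω => (V ω, U ω)) = (μ.map V).prod (μ.map U) :=
    (indepFun_iff_map_prod_eq_prod_map_map hV.aemeasurable hU.aemeasurable).1 hVU
  have hVUm : AEMeasurable (fun ω => (V ω, U ω)) μ := (hV.prodMk hU).aemeasurable
  have hint' : Integrable g ((μ.map V).prod (μ.map U)) :=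
    hlaw ▸ (integrable_map_measure hg.aestronglyMeasurable hVUm).2 hint
  rw [← integral_map hVUm hg.aestronglyMeasurable, hlaw, integral_prod g hint',
    integral_map hV.aemeasurable hg.integral_prod_right'.aestronglyMeasurable]

lemma mcStep_randomMapKernel {μ : Measure Ω} [IsFiniteMeasure μ] {ν : Measure Z} [SFinite ν]
    {F : S → Z → S} (hF : Measurable F.uncurry) {X : ℕ → Ω → S} (hX : ∀ n, Measurable (X n))
    {U : ℕ → Ω → Z} (hU : ∀ n, MeasurePreserving (U n) μ ν)
    (hXU : ∀ n, IndepFun (fun ω (i : Fin (n + 1)) => X i ω) (U n) μ)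
    (hstep : ∀ n ω, X (n + 1) ω = F (X n ω) (U n ω)) :
    MCStep μ (fun _ => randomMapKernel ν F hF) X := by
  intro n A hA φ hφ hφ01
  let g : (Fin (n + 1) → S) × Z → ℝ := fun p =>
    φ p.1 * A.indicator (fun _ => 1) (F (p.1 (Fin.last n)) p.2)
  have hg : Measurable g := by
    have hlast : Measurable fun p : (Fin (n + 1) → S) × Z => (p.1 (Fin.last n), p.2) := by
      fun_prop
    exact (hφ.comp measurable_fst).mul ((measurable_const.indicator hA).comp (hF.comp hlast))
  have hpast : Measurable fun ω (i : Fin (n + 1)) => X i ω :=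
    measurable_pi_lambda _ fun i => hX i
  have hint : Integrable (fun ω => g (fun i => X i ω, U n ω)) μ := by
    refine .of_bound (hg.comp (hpast.prodMk (hU n).measurable)).aestronglyMeasurable 1
      (ae_of_all _ fun ω => ?_)
    rw [norm_mul]
    refine mul_le_one₀ ?_ (norm_nonneg _) ((norm_indicator_le_norm_self _ _).trans_eq norm_one)
    exact (Real.norm_of_nonneg (hφ01 _).1).trans_le (hφ01 _).2
  have hinner : ∀ v, ∫ z, g (v, z) ∂ν
      = φ v * (randomMapKernel ν F hF (v (Fin.last n)) A).toReal := fun v => by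
    rw [randomMapKernel_apply_apply ν hF _ hA, ← measureReal_def,
      ← integral_indicator_one (hF.of_uncurry_left hA), ← integral_const_mul]
    rfl
  calc ∫ ω, φ (fun i => X i ω) * A.indicator (fun _ => 1) (X (n + 1) ω) ∂μ
      = ∫ ω, g (fun i => X i ω, U n ω) ∂μ := by simp only [g, hstep, Fin.val_last]
    _ = ∫ ω, ∫ z, g (fun i => X i ω, z) ∂ν ∂μ := by
        rw [integral_prodMk_of_indepFun hpast (hU n).measurable (hXU n) hg.stronglyMeasurable hint,
          (hU n).map_eq]
    _ = ∫ ω, φ (fun i => X i ω) * (randomMapKernel ν F hF (X n ω) A).toReal ∂μ := by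
        simp only [hinner, Fin.val_last]

lemma measurable_randomMapChain_cylinderEvents {F : S → Z → S} (hF : Measurable F.uncurry) (s : S)
    {k n : ℕ} (hkn : k ≤ n) : Measurable[cylinderEvents (Set.Iio n)] (randomMapChain F s k) := by
  induction k with
  | zero => exact measurable_const
  | succ k ih =>
    exact hF.comp ((ih (Nat.le_of_succ_le hkn)).prodMk (measurable_cylinderEvent_apply hkn))

lemma measurable_randomMapChain {F : S → Z → S} (hF : Measurable F.uncurry) (s : S) (n : ℕ) :
    Measurable (randomMapChain F s n) :=
  (measurable_randomMapChain_cylinderEvents hF s le_rfl).mono cylinderEvents_le_pi le_rfl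

lemma indep_cylinderEvents_infinitePi {ι : Type*} {X : ι → Type*} [∀ i, MeasurableSpace (X i)]
    (μ : ∀ i, Measure (X i)) [∀ i, IsProbabilityMeasure (μ i)] {I J : Set ι} (hIJ : Disjoint I J) :
    Indep (cylinderEvents I) (cylinderEvents J) (Measure.infinitePi μ) :=
  indep_iSup_of_disjoint (fun i => (measurable_pi_apply i).comap_le)
    (iIndepFun_infinitePi (P := μ) (X := fun _ x => x) fun _ => measurable_id) hIJ

lemma indepFun_randomMapChain (ν : Measure Z) [IsProbabilityMeasure ν] {F : S → Z → S}
    (hF : Measurable F.uncurry) (s : S) (n : ℕ) :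
    IndepFun (fun ω (i : Fin (n + 1)) => randomMapChain F s i ω) (fun ω => ω n)
      (Measure.infinitePi fun _ : ℕ => ν) := by
  have hpast : Measurable[cylinderEvents (Set.Iio n)]
      fun ω (i : Fin (n + 1)) => randomMapChain F s i ω :=
    @measurable_pi_lambda _ _ _ (cylinderEvents _) _ _ fun i =>
      measurable_randomMapChain_cylinderEvents hF s (Nat.lt_succ_iff.1 i.2)
  have hnow : Measurable[cylinderEvents {n}] fun ω : ℕ → Z => ω n :=
    measurable_cylinderEvent_apply rfl
  have hdisj : Disjoint (Set.Iio n) {n} := Set.disjoint_singleton_right.2 (lt_irrefl n)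
  exact indep_of_indep_of_le_left (indep_of_indep_of_le_right
    (indep_cylinderEvents_infinitePi (fun _ => ν) hdisj) hnow.comap_le) hpast.comap_le

lemma mcStep_randomMapChain (ν : Measure Z) [IsProbabilityMeasure ν] {F : S → Z → S}
    (hF : Measurable F.uncurry) (s : S) :
    MCStep (Measure.infinitePi fun _ : ℕ => ν) (fun _ => randomMapKernel ν F hF)
      (randomMapChain F s) :=
  mcStep_randomMapKernel hF (measurable_randomMapChain hF s)
    (measurePreserving_eval_infinitePi fun _ => ν) (indepFun_randomMapChain ν hF s)
    fun _ _ => rfl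

lemma isMChain_randomMapChain (ν : Measure Z) [IsProbabilityMeasure ν] {F : S → Z → S}
    (hF : Measurable F.uncurry) (s : S) :
    IsMChain (randomMapKernel ν F hF) s (Measure.infinitePi fun _ : ℕ => ν) (randomMapChain F s) :=
  ⟨inferInstance, measurable_randomMapChain hF s, ae_of_all _ fun _ => rfl,
    mcStep_randomMapChain ν hF s⟩

lemma isMarkovianCoupling_randomMapChain (ν : Measure Z) [IsProbabilityMeasure ν]
    {F : S → Z → S} (hF : Measurable F.uncurry) (s t : S) :
    IsMarkovianCoupling (randomMapKernel ν F hF) s t (Measure.infinitePi fun _ : ℕ => ν)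
      (randomMapChain F s) (randomMapChain F t) := by
  have hFF : Measurable (Function.uncurry fun (p : S × S) z => (F p.1 z, F p.2 z)) :=
    (hF.comp (by fun_prop : Measurable fun q : (S × S) × Z => (q.1.1, q.2))).prodMk
      (hF.comp (by fun_prop : Measurable fun q : (S × S) × Z => (q.1.2, q.2)))
  refine ⟨isMChain_randomMapChain ν hF s, isMChain_randomMapChain ν hF t,
    fun _ => randomMapKernel ν _ hFF, fun _ => inferInstance, ?_⟩
  simpa only [← randomMapChain_prodMk] using mcStep_randomMapChain ν hFF (s, t)

end RandomMap

lemma ae_exists_mem_infinitePi {Z : Type*} [MeasurableSpace Z] {ν : Measure Z}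
    [IsProbabilityMeasure ν] {A : Set Z} (hA : MeasurableSet A) (hA0 : ν A ≠ 0) :
    ∀ᵐ ω ∂(Measure.infinitePi fun _ : ℕ => ν), ∃ n, ω n ∈ A := by
  have hAc : ν Aᶜ < 1 := prob_le_one.lt_of_ne fun h => hA0 ((prob_compl_eq_one_iff hA).1 h)
  have hle (m : ℕ) :
      (Measure.infinitePi fun _ : ℕ => ν) {ω | ¬ ∃ n, ω n ∈ A} ≤ ν Aᶜ ^ m := by
    calc (Measure.infinitePi fun _ : ℕ => ν) {ω | ¬ ∃ n, ω n ∈ A}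
        ≤ (Measure.infinitePi fun _ : ℕ => ν) (Set.pi (Finset.range m) fun _ => Aᶜ) :=
          measure_mono fun ω hω i _ hi => hω ⟨i, hi⟩
      _ = ν Aᶜ ^ m := by
          rw [Measure.infinitePi_pi _ fun _ _ => hA.compl, Finset.prod_const, Finset.card_range]
  exact ae_iff.2 <| nonpos_iff_eq_zero.1 <|
    ge_of_tendsto' (ENNReal.tendsto_pow_atTop_nhds_zero_of_lt_one hAc) hle

lemma measure_eq_zero_of_invariant {E : Type*} [MeasurableSpace E] {P : Kernel E E}
    {π : Measure E} [IsFiniteMeasure π] (hπ : P.Invariant π) {B : Set E} (hB : MeasurableSet B)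
    {c : ENNReal} (hc : c < 1) (hP : ∀ x, P x B ≤ B.indicator (fun _ => c) x) : π B = 0 := by
  by_contra hB0
  have hle : π B ≤ c * π B :=
    calc π B = ∫⁻ x, P x B ∂π := by
          rw [← Measure.bind_apply hB P.measurable.aemeasurable, hπ.def]
      _ ≤ ∫⁻ x, B.indicator (fun _ => c) x ∂π := lintegral_mono hP
      _ = c * π B := lintegral_indicator_const hB c
  have hlt : c * π B < 1 * π B := ENNReal.mul_lt_mul_left hB0 (measure_ne_top π B) hc
  exact (hle.trans_lt hlt).ne (one_mul _).symm

section RunningMax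

variable {E : Type*} (e : E ≃ ℕ)

/-- The move of the running-maximum chain: `x` is replaced by the point of rank `z` in the
enumeration `e` if that rank is higher. -/
def raiseRank (x : E) (z : ℕ) : E := e.symm (max (e x) z)

lemma raiseRank_preimage_rank_lt (x : E) (N : ℕ) :
    raiseRank e x ⁻¹' {y | e y < N} = {z | e x < N ∧ z < N} := by
  ext z
  simp only [raiseRank, Set.mem_preimage, Set.mem_ofPred_eq, Equiv.apply_symm_apply, max_lt_iff]

lemma randomMapChain_raiseRank (x : E) (n : ℕ) (ω : ℕ → ℕ) :
    randomMapChain (raiseRank e) x n ω = e.symm (max (e x) ((Finset.range n).sup ω)) := by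
  induction n with
  | zero => simp [randomMapChain]
  | succ n ih =>
    simp only [randomMapChain, raiseRank, ih, Equiv.apply_symm_apply, Finset.range_add_one,
      Finset.sup_insert, max_assoc, max_comm (ω n)]

lemma randomMapChain_raiseRank_eq_of_le {x y : E} {ω : ℕ → ℕ} {n : ℕ}
    (hn : max (e x) (e y) ≤ ω n) :
    randomMapChain (raiseRank e) x (n + 1) ω = randomMapChain (raiseRank e) y (n + 1) ω := by
  have hsup : ω n ≤ (Finset.range (n + 1)).sup ω := Finset.le_sup (Finset.self_mem_range_succ n)
  rw [randomMapChain_raiseRank, randomMapChain_raiseRank,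
    max_eq_right ((le_max_left _ _).trans (hn.trans hsup)),
    max_eq_right ((le_max_right _ _).trans (hn.trans hsup))]

variable [MeasurableSpace E] [DiscreteMeasurableSpace E]

lemma measurable_uncurry_raiseRank : Measurable (raiseRank e).uncurry :=
  have : Countable E := e.countable_iff.2 inferInstance
  .of_discrete

variable {e} {ν : Measure ℕ} [IsProbabilityMeasure ν]

lemma achievable_diagonal_raiseRank (hν : ∀ N, ν (Set.Ici N) ≠ 0) :
    Achievable (randomMapKernel ν (raiseRank e) (measurable_uncurry_raiseRank e))
      (Set.diagonal E) := by
  intro x y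
  refine ⟨ℕ → ℕ, inferInstance, _, _, _, isMarkovianCoupling_randomMapChain ν _ x y, ?_⟩
  filter_upwards [ae_exists_mem_infinitePi measurableSet_Ici (hν (max (e x) (e y)))] with ω ⟨n, hn⟩
  exact ⟨n + 1, randomMapChain_raiseRank_eq_of_le e hn⟩

lemma not_exists_invariant_raiseRank (hν : ∀ N, ν (Set.Ici N) ≠ 0) :
    ¬ ∃ π : Measure E, IsProbabilityMeasure π ∧
      (randomMapKernel ν (raiseRank e) (measurable_uncurry_raiseRank e)).Invariant π := by
  rintro ⟨π, _, hπ⟩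
  have hIio (N : ℕ) : ν (Set.Iio N) < 1 := prob_le_one.lt_of_ne fun h => hν N <| by
    rwa [← Set.compl_Iio, prob_compl_eq_zero_iff measurableSet_Iio]
  have hnull (N : ℕ) : π {x | e x < N} = 0 := by
    refine measure_eq_zero_of_invariant hπ .of_discrete (hIio N) fun x => ?_
    rw [randomMapKernel_apply_apply ν _ x .of_discrete, raiseRank_preimage_rank_lt]
    by_cases hx : e x < N <;> simp [hx, Set.Iio]
  have hcover : (⋃ N : ℕ, {x | e x < N}) = Set.univ :=
    Set.iUnion_eq_univ_iff.2 fun x => ⟨e x + 1, Nat.lt_succ_self (e x)⟩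
  exact IsProbabilityMeasure.ne_zero π
    (Measure.measure_univ_eq_zero.1 (hcover ▸ measure_iUnion_null hnull))

end RunningMax

/-- The partial order in which no two distinct elements are comparable. -/
abbrev equalityOrder (E : Type*) : PartialOrder E where
  le x y := x = y
  le_refl _ := rfl
  le_trans _ _ _ := Eq.trans
  le_antisymm _ _ h _ := h

lemma monotoneKernel_of_le_imp_eq {E : Type*} [MeasurableSpace E] [Preorder E]
    (h : ∀ x y : E, x ≤ y → x = y) (P : Kernel E E) : MonotoneKernel P :=
  fun _ _ _ _ x y hxy => by rw [h x y hxy]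

lemma poissonMeasure_Ici_ne_zero {r : NNReal} (hr : 0 < r) (N : ℕ) :
    poissonMeasure r (Set.Ici N) ≠ 0 := by
  have hN : poissonMeasure r {N} ≠ 0 :=
    (measureReal_ne_zero_iff).1 (poissonMeasure_real_singleton_pos N hr).ne'
  exact mt (measure_mono_null (Set.singleton_subset_iff.2 Set.self_mem_Ici)) hN

theorem stmt11_general (E : Type*) [TopologicalSpace E] [T2Space E] [CompactSpace E]
    [MeasurableSpace E] [BorelSpace E] [Countable E] [Infinite E] :
    ∃ (_ : PartialOrder E) (_ : OrderClosedTopology E) (P : Kernel E E) (_ : IsMarkovKernel P),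
      MonotoneKernel P ∧ Achievable P {p : E × E | p.1 ≤ p.2} ∧
      (∀ x : E, ∀ ε : ENNReal, 0 < ε →
        ∃ K : Set E, IsCompact K ∧ ∀ n, (kpow P n x) Kᶜ ≤ ε) ∧
      ¬ ∃ π : Measure E, IsProbabilityMeasure π ∧ π.bind (fun a => P a) = π := by
  obtain ⟨e⟩ : Nonempty (E ≃ ℕ) := nonempty_equiv_of_countable
  have hν := poissonMeasure_Ici_ne_zero one_pos
  let _ := equalityOrder E
  refine ⟨equalityOrder E, ⟨isClosed_diagonal⟩,
    randomMapKernel (poissonMeasure 1) (raiseRank e) (measurable_uncurry_raiseRank e),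
    inferInstance, monotoneKernel_of_le_imp_eq (fun _ _ => id) _,
    achievable_diagonal_raiseRank hν, fun x ε _ => ⟨Set.univ, isCompact_univ, fun n => ?_⟩,
    not_exists_invariant_raiseRank hν⟩
  rw [Set.compl_univ, measure_empty]
  exact zero_le

/-- The subspace `{0} ∪ {1/n : n ≥ 1}` of the real line. -/
abbrev reciprocalSpace : Set ℝ := insert 0 (Set.range fun n : ℕ => 1 / ((n : ℝ) + 1))

instance : CompactSpace reciprocalSpace :=
  isCompact_iff_compactSpace.1 tendsto_one_div_add_atTop_nhds_zero_nat.isCompact_insert_range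

instance : Countable reciprocalSpace := ((Set.countable_range _).insert 0).to_subtype

instance : Infinite reciprocalSpace :=
  have hinj : Function.Injective fun n : ℕ => 1 / ((n : ℝ) + 1) := fun m n hmn => by
    simpa using hmn
  ((Set.infinite_range_of_injective hinj).mono (Set.subset_insert _ _)).to_subtype

/-- Theorem 3.4 v: there exist an ordered Polish space `E` and a monotone
Markov kernel `P` on it such that `M = {(x,y) : x ⪯ y}` is achievable and all families of
laws `(Xₙˣ)ₙ` are tight, yet `P` admits no stationary distribution. -/
theorem stmt11 :
    ∃ (E : Type) (_ : MetricSpace E) (_ : PolishSpace E) (_ : MeasurableSpace E)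
      (_ : BorelSpace E) (_ : PartialOrder E) (_ : OrderClosedTopology E)
      (P : Kernel E E) (_ : IsMarkovKernel P),
      MonotoneKernel P ∧ Achievable P {p : E × E | p.1 ≤ p.2} ∧
      (∀ x : E, ∀ ε : ENNReal, 0 < ε →
        ∃ K : Set E, IsCompact K ∧ ∀ n, (kpow P n x) Kᶜ ≤ ε) ∧
      ¬ ∃ π : Measure E, IsProbabilityMeasure π ∧ π.bind (fun a => P a) = π :=
  ⟨reciprocalSpace, inferInstance, inferInstance, inferInstance, inferInstance,
    stmt11_general reciprocalSpace⟩
end
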